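/- Let q be a prime power of characteristic greater than 3, let n ≥ 5, and let F ∈ F_q[x_1,…,x_n] be a cubic form whose zero locus X = V(F) ⊂ P^{n-1} is smooth over \bar{F}_q. Then there exists a constant c > 0 (depending on q, n and F but not on e) such that for every e ≥ 1, the number of tuples (x_1(t),…,x_n(t)) ∈ F_q[t]^n with gcd(x_1,…,x_n) = 1 in F_q[t], max_i deg x_i = e, and F(x_1(t),…,x_n(t)) = 0 in F_q[t], is at most c · 27^e · q^{e(n−3)}. Equivalently, the number of F_q(t)-rational points of X of naive height exactly q^e satisfies N_X(e) = O(27^e q^{e(n−3)}). -/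

import Mathlib

open MvPolynomial

/-!
A solution `x(t) = ∑ x_a t ^ a` of degree at most `e` is a point of the affine space of dimension
`n (e + 1)` with coordinates in `F_q`, at which the `3 e + 1` coefficients `G m` of `F(x(t))` vanish.
The bound comes from two facts about the closed cone `W 0` of these points over the algebraic closure
`k`.

*Dimension.* `W 0` has dimension at most `d = e (n - 3) + (n - 1)`. Let `W j` be the tuples of `W 0`
divisible by `t ^ j`. Either `x_j = 0`, or `x_j` is a nonzero point of the cubic cone, of dimension
`n - 1`. In the second case, for a given line `k p` of leading coefficients, the lowest equations say
that `x_{j+1}` is tangent to the cubic at `p` and that `x_{j+2}` satisfies a linear equation up to a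
quadratic term in `x_{j+1}`; these survive on the closed cone `W' j φ p`. Intersecting this cone with
`x_j = 0` costs one dimension and leaves tuples of `W (j + 1)` whose leading coefficient lies in
`Cp p`, the cone over the lines of the cubic through `p`. This gives a simultaneous induction
(`dim_main`) for `W` and `W'`, based on three facts about the smooth cubic: the cone itself has
dimension `n - 1`, the cone `Cp p` has dimension `n - 3` for general `p` and `n - 2` for every `p`
(`dim_Cp`, `dim_Cp_of_not_mem`), and the exceptional `p`, where the tangent quadric contains the whole
tangent hyperplane, are finitely many up to scaling (`dim_Eck`). The dimension theory needed (local
dimension as length of chains of primes, its independence of the point, Krull's principal ideal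
theorem, fibres over general linear sections) is developed first. It follows that `d` linear forms
`l_j` on the affine space have only the common zero `0` on `W 0` (`exists_forms`).

*Degree.* At the points with coordinates in `F_q`, the form `l_j = ∑ b_i X_i` satisfies
`∑ b_i ^ q (X_i ^ q - X_i) = 0`, an equation of degree `q` with top form `l_j ^ q`. Together with the
`G m` this is a system of `3 e + 1 + d = n (e + 1)` equations in as many unknowns, whose top forms have
no common zero but `0`. By Bézout (`card_le_prod`) it has at most `3 ^ (3 e + 1) q ^ d` solutions, which
is the claim with constant `3 q ^ (n - 1)`. The form of Bézout's theorem used is proved by counting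
monomials: the polynomial ring is finite over the subring generated by the equations, these are
algebraically independent, and a linear form separating the solutions is integral over that subring,
of degree at least the number of solutions.
-/

namespace CubicCount
set_option linter.unusedSectionVars false

/-! ### Local dimension through chains of prime ideals -/

section Chains
variable {k : Type*} [Field k] {σ : Type*}

/-- The maximal ideal of the polynomials vanishing at the point `x` of affine space. -/
noncomputable def ptIdeal (x : σ → k) : Ideal (MvPolynomial σ k) := RingHom.ker (eval x)

lemma mem_ptIdeal {x : σ → k} {f : MvPolynomial σ k} : f ∈ ptIdeal x ↔ eval x f = 0 := Iff.rfl

lemma ptIdeal_eq_vanishing (x : σ → k) : ptIdeal x = vanishingIdeal k {x} := by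
  ext f
  simp [mem_ptIdeal, aeval_eq_eval]

lemma ptIdeal_isMaximal (x : σ → k) : (ptIdeal x).IsMaximal :=
  RingHom.ker_isMaximal_of_surjective _ (fun a => ⟨C a, by simp⟩)

lemma ptIdeal_isPrime (x : σ → k) : (ptIdeal x).IsPrime := (ptIdeal_isMaximal x).isPrime

/-- `Cle x P d` says that every chain of primes containing `P` and ending at the maximal ideal of
the point `x` has length at most `d`; that is, `V(P)` has local dimension at most `d` at `x`. -/
def Cle (x : σ → k) (P : Ideal (MvPolynomial σ k)) (d : ℕ) : Prop :=
  ∀ p : LTSeries (PrimeSpectrum (MvPolynomial σ k)), P ≤ p.head.asIdeal →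
    p.last.asIdeal = ptIdeal x → p.length ≤ d

lemma Cle.mono {x : σ → k} {P P' : Ideal (MvPolynomial σ k)} {d d' : ℕ} (h : Cle x P d)
    (hP : P ≤ P') (hd : d ≤ d') : Cle x P' d' :=
  fun p h1 h2 => (h p (hP.trans h1) h2).trans hd

lemma Cle.self (x : σ → k) : Cle x (ptIdeal x) 0 := by
  intro p h1 h2
  by_contra hne
  have : p.head < p.last := by
    have := p.head_le_last
    refine lt_of_le_of_ne this ?_
    intro h
    have h3 : p 0 < p (Fin.last _) := p.strictMono (by
      rw [Fin.lt_def]; simp; omega)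
    exact absurd h (ne_of_lt h3)
  have h4 : p.head.asIdeal < p.last.asIdeal := this
  rw [h2] at h4
  exact absurd h1 (not_le_of_gt h4)

lemma Cle.of_lt {x : σ → k} {P P' : Ideal (MvPolynomial σ k)} {d : ℕ} (h : Cle x P (d + 1))
    (hP : P.IsPrime) (hlt : P < P') : Cle x P' d := by
  intro p h1 h2
  have := h (p.cons ⟨P, hP⟩ (show P < p.head.asIdeal from lt_of_lt_of_le hlt h1)) (by simp)
    (by simpa using h2)
  simpa using this

/-- Krull's principal ideal theorem: cutting by one function lowers the local dimension by at
most one. -/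
lemma Cle.of_cut [Finite σ] {x : σ → k} {P : Ideal (MvPolynomial σ k)} {d : ℕ}
    (f : MvPolynomial σ k) (hf : eval x f = 0)
    (h : ∀ P' : Ideal (MvPolynomial σ k), P'.IsPrime → P ≤ P' → f ∈ P' → P' ≤ ptIdeal x →
      Cle x P' d) : Cle x P (d + 1) := by
  intro p h1 h2
  rcases Nat.eq_zero_or_pos p.length with h0 | h0
  · omega
  have hfl : f ∈ p.last.asIdeal := by rw [h2]; exact hf
  obtain ⟨q, hq1, hq2, hq3, hq4⟩ := PrimeSpectrum.exist_ltSeries_mem_one_of_mem_last p hfl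
  have hqne : q.length ≠ 0 := by omega
  have hl : (q.tail hqne).length = q.length - 1 := rfl
  have hlast : (q.tail hqne).last = q.last := by simp
  have hle : (q.tail hqne).head ≤ (q.tail hqne).last := LTSeries.head_le_last _
  have hhead : (q.tail hqne).head = q 1 := by simp
  have hle2 : (q.tail hqne).head.asIdeal ≤ ptIdeal x := by
    have : (q.tail hqne).head.asIdeal ≤ (q.tail hqne).last.asIdeal := hle
    rwa [hlast, ← hq4, h2] at this
  have := h (q.tail hqne).head.asIdeal (q.tail hqne).head.isPrime ?_ (by rw [hhead]; exact hq1) hle2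
    (q.tail hqne) le_rfl (by rw [hlast, ← hq4, h2])
  · omega
  · have h5 : q.head ≤ q 1 := by
      have : q 0 ≤ q 1 := q.strictMono.monotone (Fin.zero_le _)
      exact this
    have h6 : q.head.asIdeal ≤ (q 1).asIdeal := h5
    rw [hhead]
    rw [← hq3] at h6
    exact h1.trans h6

end Chains

section Chains
variable {k : Type*} [Field k] {σ : Type*}

lemma ker_algHom_eq_ptIdeal {τ : Type*} (φ : MvPolynomial τ k →ₐ[k] k) :
    RingHom.ker φ.toRingHom = ptIdeal (fun i => φ (X i)) := by
  have : φ = aeval (fun i => φ (X i)) := by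
    ext i; simp
  ext f
  rw [mem_ptIdeal, ← aeval_eq_eval]
  conv_lhs => rw [this]
  rfl

/-- A chain of primes ending at one point can be translated so as to end at another. -/
lemma exists_translate {τ : Type*} (z w : τ → k) (l : LTSeries (PrimeSpectrum (MvPolynomial τ k)))
    (hl : l.last.asIdeal = ptIdeal z) :
    ∃ l' : LTSeries (PrimeSpectrum (MvPolynomial τ k)), l'.length = l.length ∧
      l'.last.asIdeal = ptIdeal w := by
  let t : MvPolynomial τ k →ₐ[k] MvPolynomial τ k := aeval (fun i => X i - C (z i - w i))
  let t' : MvPolynomial τ k →ₐ[k] MvPolynomial τ k := aeval (fun i => X i + C (z i - w i))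
  have ht : t'.comp t = AlgHom.id k _ := by
    ext i : 1
    simp [t, t', MvPolynomial.algebraMap_eq]
  have ht2 : t.comp t' = AlgHom.id k _ := by
    ext i : 1
    simp [t, t', MvPolynomial.algebraMap_eq]
  have hsurj : Function.Surjective t.toRingHom := fun f => ⟨t' f, by
    have := DFunLike.congr_fun ht2 f
    simpa using this⟩
  refine ⟨l.map (PrimeSpectrum.comap t.toRingHom) (RingHom.strictMono_comap_of_surjective hsurj),
    rfl, ?_⟩
  rw [LTSeries.last_map, PrimeSpectrum.comap_asIdeal, hl]
  ext f
  rw [Ideal.mem_comap, mem_ptIdeal, mem_ptIdeal]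
  have : (aeval z : MvPolynomial τ k →ₐ[k] k).comp t = aeval w := by
    ext i
    simp [t]
  have := DFunLike.congr_fun this f
  simp only [AlgHom.comp_apply, aeval_eq_eval] at this
  exact this ▸ Iff.rfl

/-- Irreducible affine varieties are equidimensional: the local dimension bound transfers between
points of `V(P)`. Proof by Noether normalization, translation in affine space, and going down. -/
lemma Cle.transfer [Finite σ] {x y : σ → k} {P : Ideal (MvPolynomial σ k)} {d : ℕ}
    (hP : P.IsPrime) (hx : P ≤ ptIdeal x) (hy : P ≤ ptIdeal y) (h : Cle x P d) : Cle y P d := by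
  intro p hp1 hp2
  obtain ⟨s, g, ginj, gint⟩ := exists_integral_inj_algHom_of_fg k (MvPolynomial σ k ⧸ P)
  let : Algebra (MvPolynomial (Fin s) k) (MvPolynomial σ k ⧸ P) := g.toRingHom.toAlgebra
  have : Algebra.IsIntegral (MvPolynomial (Fin s) k) (MvPolynomial σ k ⧸ P) :=
    ⟨fun a => gint a⟩
  have : FaithfulSMul (MvPolynomial (Fin s) k) (MvPolynomial σ k ⧸ P) :=
    (faithfulSMul_iff_algebraMap_injective _ _).2 ginj
  -- evaluation at a point of `V(P)` factors through the coordinate ring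
  let ev : ∀ z : σ → k, P ≤ ptIdeal z → (MvPolynomial σ k ⧸ P) →ₐ[k] k := fun z hz =>
    Ideal.Quotient.liftₐ P (aeval z) (fun a ha => by
      have := hz ha
      rwa [mem_ptIdeal, ← aeval_eq_eval] at this)
  have hev : ∀ z hz f, ev z hz (Ideal.Quotient.mk P f) = eval z f := fun z hz f => by
    simp [ev]
  have hker : ∀ z hz, (RingHom.ker (ev z hz).toRingHom).comap (Ideal.Quotient.mk P) = ptIdeal z := by
    intro z hz
    ext f
    rw [Ideal.mem_comap, RingHom.mem_ker, mem_ptIdeal, ← hev z hz]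
    rfl
  have hker2 : ∀ z hz, (RingHom.ker (ev z hz).toRingHom).comap
      (algebraMap (MvPolynomial (Fin s) k) (MvPolynomial σ k ⧸ P))
      = ptIdeal (fun i => ev z hz (g (X i))) := by
    intro z hz
    exact ker_algHom_eq_ptIdeal ((ev z hz).comp g)
  have hpz : ∀ i, p i ∈ PrimeSpectrum.zeroLocus (P : Set (MvPolynomial σ k)) := by
    intro i
    rw [PrimeSpectrum.mem_zeroLocus]
    have : p.head ≤ p i := p.head_le i
    exact hp1.trans this
  let e := P.primeSpectrumQuotientOrderIsoZeroLocus
  let q : LTSeries (PrimeSpectrum (MvPolynomial σ k ⧸ P)) :=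
    LTSeries.mk p.length (fun i => e.symm ⟨p i, hpz i⟩) (fun i j hij =>
      e.symm.strictMono (Subtype.mk_lt_mk.2 (p.strictMono hij)))
  have hqlast : q.last.asIdeal = RingHom.ker (ev y hy).toRingHom := by
    have h1 : PrimeSpectrum.comap (Ideal.Quotient.mk P) q.last = p.last := by
      have : (e (e.symm ⟨p (Fin.last _), hpz _⟩)).1 = p (Fin.last _) := by
        rw [OrderIso.apply_symm_apply]
      exact this
    have h2 := congrArg PrimeSpectrum.asIdeal h1
    rw [PrimeSpectrum.comap_asIdeal, hp2, ← hker y hy] at h2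
    exact Ideal.comap_injective_of_surjective _ Ideal.Quotient.mk_surjective h2
  have hsm : StrictMono (PrimeSpectrum.comap
      (algebraMap (MvPolynomial (Fin s) k) (MvPolynomial σ k ⧸ P))) := by
    intro a b hab
    have := a.isPrime
    exact Ideal.IsIntegral.comap_lt_comap hab
  obtain ⟨l', hl'1, hl'2⟩ := exists_translate _ (fun i => ev x hx (g (X i)))
    (q.map _ hsm) (by
      rw [LTSeries.last_map, PrimeSpectrum.comap_asIdeal, hqlast, hker2 y hy])
  have hprime : (RingHom.ker (ev x hx).toRingHom).IsPrime := RingHom.ker_isPrime _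
  have : (RingHom.ker (ev x hx).toRingHom).LiesOver l'.last.asIdeal :=
    ⟨by rw [hl'2, Ideal.under_def, hker2 x hx]⟩
  obtain ⟨L, hL1, hL2, -⟩ := Ideal.exists_ltSeries_of_hasGoingDown l'
    (RingHom.ker (ev x hx).toRingHom)
  have := h (L.map (PrimeSpectrum.comap (Ideal.Quotient.mk P))
    (RingHom.strictMono_comap_of_surjective Ideal.Quotient.mk_surjective)) ?_ ?_
  · have h3 : (L.map (PrimeSpectrum.comap (Ideal.Quotient.mk P))
      (RingHom.strictMono_comap_of_surjective Ideal.Quotient.mk_surjective)).length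
        = p.length := by
      change L.length = _
      rw [hL1, hl'1]; rfl
    omega
  · rw [LTSeries.head_map, PrimeSpectrum.comap_asIdeal]
    intro f hf
    rw [Ideal.mem_comap, Ideal.Quotient.eq_zero_iff_mem.2 hf]
    exact zero_mem _
  · rw [LTSeries.last_map, PrimeSpectrum.comap_asIdeal, hL2]
    exact hker x hx

lemma krullDim_mvPolynomial [Finite σ] :
    Order.krullDim (PrimeSpectrum (MvPolynomial σ k)) = Nat.card σ := by
  have h2 := MvPolynomial.ringKrullDim_of_isNoetherianRing (R := k) (ι := σ)
  rwa [ringKrullDim_eq_zero_of_field, zero_add, ringKrullDim] at h2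

/-- Affine space has dimension at most the number of variables. -/
lemma Cle.bot [Finite σ] (x : σ → k) : Cle x ⊥ (Nat.card σ) := by
  intro p _ _
  have h1 := Order.LTSeries.length_le_krullDim p
  rw [krullDim_mvPolynomial] at h1
  exact_mod_cast h1

/-- Affine space has dimension at least the number of variables. -/
lemma le_of_cle_bot [Finite σ] [IsAlgClosed k] {x : σ → k} {d : ℕ} (h : Cle x ⊥ d) :
    Nat.card σ ≤ d := by
  obtain ⟨l, hl⟩ := (Order.le_krullDim_iff (α := PrimeSpectrum (MvPolynomial σ k))
    (n := Nat.card σ)).1 krullDim_mvPolynomial.ge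
  obtain ⟨M, hM, hlM⟩ := Ideal.exists_le_maximal _ l.last.isPrime.ne_top
  obtain ⟨y, hy⟩ := isMaximal_iff_eq_vanishingIdeal_singleton.1 hM
  rw [← ptIdeal_eq_vanishing] at hy
  have key : ∀ l : LTSeries (PrimeSpectrum (MvPolynomial σ k)), l.last.asIdeal = ptIdeal y →
      l.length ≤ d := by
    intro l hl
    obtain ⟨l', h1, h2⟩ := exists_translate y x l hl
    rw [← h1]
    exact h l' bot_le h2
  rcases hlM.eq_or_lt with h1 | h1
  · rw [← hl]
    exact key l (h1.trans hy)
  · have := key (l.snoc ⟨M, hM.isPrime⟩ h1) (by simpa using hy)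
    simp at this
    omega

end Chains

/-! ### Closed sets, cones and irreducibility in affine space -/

section Sets
variable {k : Type*} [Field k] {σ : Type*}

/-- The zero set of an ideal in affine space. -/
def VP (P : Ideal (MvPolynomial σ k)) : Set (σ → k) := {x | P ≤ ptIdeal x}

lemma mem_VP {P : Ideal (MvPolynomial σ k)} {x : σ → k} :
    x ∈ VP P ↔ ∀ f ∈ P, eval x f = 0 := Iff.rfl

/-- Nullstellensatz for a prime ideal. -/
lemma mem_of_forall_VP [Finite σ] [IsAlgClosed k] {P : Ideal (MvPolynomial σ k)} (hP : P.IsPrime)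
    {f : MvPolynomial σ k} (h : ∀ x ∈ VP P, eval x f = 0) : f ∈ P := by
  have h1 := vanishingIdeal_zeroLocus_eq_radical (k := k) (K := k) P
  rw [hP.radical] at h1
  rw [← h1, mem_vanishingIdeal_iff]
  intro x hx
  rw [aeval_eq_eval]
  refine h x (fun g hg => ?_)
  have := hx g hg
  rwa [aeval_eq_eval] at this

lemma VP_ptIdeal (v : σ → k) : VP (ptIdeal v) = {v} := by
  ext x
  refine ⟨fun h => ?_, fun h => by rw [h]; exact le_refl (ptIdeal v)⟩
  funext i
  have := mem_VP.1 h (X i - C (v i)) (by simp [mem_ptIdeal])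
  simpa [sub_eq_zero] using this

lemma exists_mem_VP [Finite σ] [IsAlgClosed k] {P : Ideal (MvPolynomial σ k)} (hP : P ≠ ⊤) :
    ∃ x, x ∈ VP P := by
  obtain ⟨M, hM, hPM⟩ := Ideal.exists_le_maximal _ hP
  obtain ⟨y, hy⟩ := isMaximal_iff_eq_vanishingIdeal_singleton.1 hM
  rw [← ptIdeal_eq_vanishing] at hy
  exact ⟨y, hPM.trans hy.le⟩

/-- Polynomial functions on affine space. -/
def IsPoly (f : (σ → k) → k) : Prop := ∃ p : MvPolynomial σ k, ∀ x, eval x p = f x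

lemma IsPoly.const (c : k) : IsPoly (fun _ : σ → k => c) := ⟨C c, by simp⟩
lemma IsPoly.coord (i : σ) : IsPoly (fun x : σ → k => x i) := ⟨X i, by simp⟩
lemma IsPoly.add {f g : (σ → k) → k} (hf : IsPoly f) (hg : IsPoly g) :
    IsPoly (fun x => f x + g x) := by
  obtain ⟨p, hp⟩ := hf
  obtain ⟨q, hq⟩ := hg
  exact ⟨p + q, by simp [hp, hq]⟩
lemma IsPoly.sub {f g : (σ → k) → k} (hf : IsPoly f) (hg : IsPoly g) :
    IsPoly (fun x => f x - g x) := by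
  obtain ⟨p, hp⟩ := hf
  obtain ⟨q, hq⟩ := hg
  exact ⟨p - q, by simp [hp, hq]⟩
lemma IsPoly.mul {f g : (σ → k) → k} (hf : IsPoly f) (hg : IsPoly g) :
    IsPoly (fun x => f x * g x) := by
  obtain ⟨p, hp⟩ := hf
  obtain ⟨q, hq⟩ := hg
  exact ⟨p * q, by simp [hp, hq]⟩
lemma IsPoly.sum {ι : Type*} (s : Finset ι) {f : ι → (σ → k) → k} (hf : ∀ i ∈ s, IsPoly (f i)) :
    IsPoly (fun x => ∑ i ∈ s, f i x) := by
  classical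
  induction s using Finset.induction_on with
  | empty => simpa using IsPoly.const 0
  | insert a s ha ih =>
    simp only [Finset.sum_insert ha]
    exact (hf a (by simp)).add (ih fun i hi => hf i (by simp [hi]))
lemma IsPoly.linear [Finite σ] (l : (σ → k) →ₗ[k] k) : IsPoly (fun x => l x) := by
  classical
  cases nonempty_fintype σ
  have : (fun x => l x) = fun x => ∑ i, x i * l (Pi.single i 1) := by
    funext x
    conv_lhs => rw [← LinearMap.sum_single_apply (fun _ => k) x, map_sum]
    refine Finset.sum_congr rfl fun i _ => ?_
    rw [show Pi.single i (x i) = x i • (Pi.single i 1 : σ → k) by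
      rw [← Pi.single_smul]; simp]
    simp
  rw [this]
  exact IsPoly.sum _ fun i _ => (IsPoly.coord i).mul (IsPoly.const _)

/-- Zariski closed subsets of affine space. -/
def Zar (Z : Set (σ → k)) : Prop :=
  ∃ S : Set (MvPolynomial σ k), ∀ x, x ∈ Z ↔ ∀ f ∈ S, eval x f = 0

lemma Zar.of_poly {f : (σ → k) → k} (hf : IsPoly f) : Zar {x | f x = 0} := by
  obtain ⟨p, hp⟩ := hf
  exact ⟨{p}, by simp [hp]⟩

lemma Zar.forall {ι : Sort*} {Z : ι → Set (σ → k)} (h : ∀ i, Zar (Z i)) :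
    Zar {x | ∀ i, x ∈ Z i} := by
  choose S hS using h
  refine ⟨⋃ i, S i, fun x => ?_⟩
  simp only [Set.mem_ofPred_eq, hS, Set.mem_iUnion]
  exact ⟨fun h f ⟨i, hi⟩ => h i f hi, fun h i f hi => h f ⟨i, hi⟩⟩

lemma Zar.inter {Z Z' : Set (σ → k)} (h : Zar Z) (h' : Zar Z') : Zar (Z ∩ Z') := by
  obtain ⟨S, hS⟩ := h
  obtain ⟨S', hS'⟩ := h'
  refine ⟨S ∪ S', fun x => ?_⟩
  rw [Set.mem_inter_iff, hS, hS']
  exact ⟨fun h f hf => hf.elim (h.1 f) (h.2 f), fun h => ⟨fun f hf => h f (Or.inl hf),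
    fun f hf => h f (Or.inr hf)⟩⟩

lemma Zar.univ : Zar (Set.univ : Set (σ → k)) := ⟨∅, by simp⟩

/-- `Z` is stable under scaling. -/
def IsCone (Z : Set (σ → k)) : Prop := ∀ x ∈ Z, ∀ s : k, s • x ∈ Z

/-- Irreducibility of `V(P)`. -/
lemma VP_subset_or [Finite σ] [IsAlgClosed k] {P : Ideal (MvPolynomial σ k)} (hP : P.IsPrime)
    {Z Z' : Set (σ → k)} (hZ : Zar Z) (hZ' : Zar Z') (h : VP P ⊆ Z ∪ Z') :
    VP P ⊆ Z ∨ VP P ⊆ Z' := by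
  obtain ⟨S, hS⟩ := hZ
  obtain ⟨S', hS'⟩ := hZ'
  by_contra hcon
  rw [not_or, Set.not_subset, Set.not_subset] at hcon
  obtain ⟨⟨x, hx, hxZ⟩, ⟨y, hy, hyZ⟩⟩ := hcon
  rw [hS] at hxZ
  rw [hS'] at hyZ
  push Not at hxZ hyZ
  obtain ⟨f, hf, hfx⟩ := hxZ
  obtain ⟨g, hg, hgy⟩ := hyZ
  have : f * g ∈ P := by
    refine mem_of_forall_VP hP fun z hz => ?_
    rw [map_mul]
    rcases h hz with h1 | h1
    · rw [(hS z).1 h1 f hf, zero_mul]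
    · rw [(hS' z).1 h1 g hg, mul_zero]
  rcases hP.mem_or_mem this with h1 | h1
  · exact hfx (hx h1)
  · exact hgy (hy h1)

/-- `V(P)` is irreducible: one of two polynomial functions with product zero on it is zero. -/
lemma VP_mul_eq_zero [Finite σ] [IsAlgClosed k] {P : Ideal (MvPolynomial σ k)} (hP : P.IsPrime)
    {f g : (σ → k) → k} (hf : IsPoly f) (hg : IsPoly g) (h : ∀ x ∈ VP P, f x * g x = 0) :
    (∀ x ∈ VP P, f x = 0) ∨ (∀ x ∈ VP P, g x = 0) :=
  VP_subset_or hP (Zar.of_poly hf) (Zar.of_poly hg) fun x hx => mul_eq_zero.1 (h x hx)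

/-- The prime ideal of the closure of the cone over `V(P)`: the kernel of
`X i ↦ (X i mod P) * s`. -/
noncomputable def coneIdeal (P : Ideal (MvPolynomial σ k)) : Ideal (MvPolynomial σ k) :=
  RingHom.ker (aeval (R := k) (fun i => Polynomial.C (Ideal.Quotient.mk P (X i)) *
    (Polynomial.X : Polynomial (MvPolynomial σ k ⧸ P)))).toRingHom

lemma coneIdeal_isPrime {P : Ideal (MvPolynomial σ k)} (hP : P.IsPrime) :
    (coneIdeal P).IsPrime := RingHom.ker_isPrime _

lemma mem_coneIdeal [Finite σ] [IsAlgClosed k] {P : Ideal (MvPolynomial σ k)} (hP : P.IsPrime)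
    {f : MvPolynomial σ k} : f ∈ coneIdeal P ↔ ∀ x ∈ VP P, ∀ s : k, eval (s • x) f = 0 := by
  let ev : ∀ z : σ → k, P ≤ ptIdeal z → (MvPolynomial σ k ⧸ P) →ₐ[k] k := fun z hz =>
    Ideal.Quotient.liftₐ P (aeval z) (fun a ha => by
      have := hz ha
      rwa [mem_ptIdeal, ← aeval_eq_eval] at this)
  have hev : ∀ z hz f, ev z hz (Ideal.Quotient.mk P f) = eval z f := fun z hz f => by
    simp [ev]
  set φ := (aeval (R := k) (fun i => Polynomial.C (Ideal.Quotient.mk P (X i)) *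
    (Polynomial.X : Polynomial (MvPolynomial σ k ⧸ P)))) with hφ
  have key : ∀ x (hx : x ∈ VP P) (s : k) f,
      ((φ f).map (ev x hx).toRingHom).eval s = eval (s • x) f := by
    intro x hx s f
    have h1 : ((Polynomial.aeval s).comp
      ((Polynomial.mapAlgHom (ev x hx)).comp φ)) = aeval (R := k) (s • x) := by
      ext i
      have hX : φ (X i) = Polynomial.C (Ideal.Quotient.mk P (X i)) * Polynomial.X := by
        rw [hφ, aeval_X]
      simp only [AlgHom.comp_apply, hX]
      have hxi : ev x hx (Ideal.Quotient.mk P (X i)) = x i := by simp [hev x hx]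
      simp [hxi]
      exact mul_comm _ _
    have h2 := DFunLike.congr_fun h1 f
    simpa [aeval_eq_eval, Polynomial.coe_aeval_eq_eval] using h2
  change φ f = 0 ↔ _
  constructor
  · intro h x hx s
    rw [← key x hx s f, h]
    simp
  · intro h
    ext m
    rw [Polynomial.coeff_zero]
    obtain ⟨g, hg⟩ := Ideal.Quotient.mk_surjective ((φ f).coeff m)
    rw [← hg, Ideal.Quotient.eq_zero_iff_mem]
    refine mem_of_forall_VP hP fun x hx => ?_
    have h0 : (φ f).map (ev x hx).toRingHom = 0 := by
      refine Polynomial.funext fun s => ?_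
      rw [key x hx, h x hx s, Polynomial.eval_zero]
    have := congrArg (fun p => Polynomial.coeff p m) h0
    rw [← hev x hx, hg]
    simpa using this

variable [Finite σ] [IsAlgClosed k]

lemma coneIdeal_le {P : Ideal (MvPolynomial σ k)} (hP : P.IsPrime) : coneIdeal P ≤ P := by
  intro f hf
  refine mem_of_forall_VP hP fun x hx => ?_
  simpa using (mem_coneIdeal hP).1 hf x hx 1

lemma coneIdeal_le_zero {P : Ideal (MvPolynomial σ k)} (hP : P.IsPrime) :
    coneIdeal P ≤ ptIdeal 0 := by
  intro f hf
  obtain ⟨x, hx⟩ := exists_mem_VP hP.ne_top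
  have := (mem_coneIdeal hP).1 hf x hx 0
  rwa [zero_smul] at this

lemma subset_VP_coneIdeal {P : Ideal (MvPolynomial σ k)} (hP : P.IsPrime) :
    VP P ⊆ VP (coneIdeal P) := fun _ hx => (coneIdeal_le hP).trans hx

lemma VP_coneIdeal_subset {P : Ideal (MvPolynomial σ k)} (hP : P.IsPrime) {Z : Set (σ → k)}
    (hZ : Zar Z) (hc : IsCone Z) (h : VP P ⊆ Z) : VP (coneIdeal P) ⊆ Z := by
  obtain ⟨S, hS⟩ := hZ
  intro x hx
  rw [hS]
  intro f hf
  refine hx ((mem_coneIdeal hP).2 fun y hy s => ?_)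
  exact (hS _).1 (hc y (h hy) s) f hf

lemma isCone_VP_coneIdeal {P : Ideal (MvPolynomial σ k)} (hP : P.IsPrime) :
    IsCone (VP (coneIdeal P)) := by
  intro x hx s
  rw [mem_VP]
  intro f hf
  have h1 : ∀ y, eval y (aeval (R := k) (fun i => C s * X i) f) = eval (s • y) f := by
    intro y
    have : (aeval (R := k) y).comp (aeval (R := k) (fun i => C s * X i)) =
        aeval (R := k) (s • y) := by
      ext i; simp
    have := DFunLike.congr_fun this f
    simpa [aeval_eq_eval] using this
  rw [← h1]
  refine hx ((mem_coneIdeal hP).2 fun y hy t => ?_)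
  rw [h1, smul_smul]
  exact (mem_coneIdeal hP).1 hf y hy _

end Sets

/-! ### Dimension of cones -/

section Dimension
variable {k : Type*} [Field k] {σ : Type*}

/-- `Dim Z d`: every irreducible closed subset of `Z` through the origin has dimension at most `d`
there. For a closed cone this says that the dimension of `Z` is at most `d`. -/
def Dim (Z : Set (σ → k)) (d : ℕ) : Prop :=
  ∀ P : Ideal (MvPolynomial σ k), P.IsPrime → P ≤ ptIdeal 0 → VP P ⊆ Z → Cle 0 P d

lemma Dim.mono {Z Z' : Set (σ → k)} {d d' : ℕ} (h : Dim Z d) (hZ : Z' ⊆ Z) (hd : d ≤ d') :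
    Dim Z' d' := fun P hP h0 hPZ => (h P hP h0 (hPZ.trans hZ)).mono le_rfl hd

variable [Finite σ] [IsAlgClosed k]

lemma Dim.zero : Dim ({0} : Set (σ → k)) 0 := by
  intro P hP h0 hPZ
  refine (Cle.self 0).mono ?_ le_rfl
  intro f hf
  refine mem_of_forall_VP hP fun x hx => ?_
  rw [hPZ hx]
  exact hf

lemma Dim.univ : Dim (Set.univ : Set (σ → k)) (Nat.card σ) :=
  fun _ _ _ _ => (Cle.bot 0).mono bot_le le_rfl

/-- Cutting by one polynomial function lowers the dimension by at most one. -/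
lemma Dim.of_cut {Z : Set (σ → k)} {d : ℕ} {f : (σ → k) → k} (hf : IsPoly f) (hf0 : f 0 = 0)
    (h : Dim (Z ∩ {x | f x = 0}) d) : Dim Z (d + 1) := by
  obtain ⟨p, hp⟩ := hf
  intro P hP h0 hPZ
  refine Cle.of_cut p (by rw [hp, hf0]) fun P' hP' hPP' hf' hP'0 => h P' hP' hP'0 fun x hx => ?_
  exact ⟨hPZ (hPP'.trans hx), by
    have := hx hf'
    rwa [mem_ptIdeal, hp] at this⟩

lemma Dim.line (u : σ → k) : Dim {x | ∃ s : k, x = s • u} 1 := by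
  by_cases hu : u = 0
  · refine Dim.zero.mono ?_ zero_le_one
    rintro x ⟨s, rfl⟩
    simp [hu]
  · obtain ⟨i, hi⟩ := Function.ne_iff.1 hu
    refine Dim.of_cut (IsPoly.coord i) rfl (Dim.zero.mono ?_ le_rfl)
    rintro x ⟨⟨s, rfl⟩, hx⟩
    have : s * u i = 0 := hx
    rcases mul_eq_zero.1 this with h | h
    · simp [h]
    · exact absurd h hi

lemma eq_ptIdeal_of_cle_zero {x : σ → k} {P : Ideal (MvPolynomial σ k)} (hP : P.IsPrime)
    (hx : P ≤ ptIdeal x) (h : Cle x P 0) : P = ptIdeal x := by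
  by_contra hne
  obtain ⟨p, hp1, hp2⟩ : ∃ p : LTSeries (PrimeSpectrum (MvPolynomial σ k)),
      p.head.asIdeal = ptIdeal x ∧ p.last.asIdeal = ptIdeal x :=
    ⟨RelSeries.singleton _ ⟨ptIdeal x, ptIdeal_isPrime x⟩, rfl, rfl⟩
  have := h (p.cons ⟨P, hP⟩ (show P < p.head.asIdeal from hp1 ▸ lt_of_le_of_ne hx hne))
    (by simp) (by simpa using hp2)
  simp at this

lemma mem_coneIdeal_ptIdeal {u : σ → k} {f : MvPolynomial σ k} :
    f ∈ coneIdeal (ptIdeal u) ↔ ∀ s : k, eval (s • u) f = 0 := by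
  rw [mem_coneIdeal (ptIdeal_isPrime u), VP_ptIdeal]
  simp

lemma VP_coneIdeal_ptIdeal (u : σ → k) : VP (coneIdeal (ptIdeal u)) ⊆ {x | ∃ s : k, x = s • u} := by
  intro x hx
  by_cases hu : u = 0
  · refine ⟨0, ?_⟩
    have : VP (coneIdeal (ptIdeal u)) ⊆ {0} := by
      refine VP_coneIdeal_subset (ptIdeal_isPrime u) ⟨Set.range X, fun x => ?_⟩ ?_ ?_
      · simp [funext_iff]
      · intro x hx s
        rw [Set.mem_singleton_iff] at hx ⊢
        simp [hx]
      · rw [VP_ptIdeal, hu]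
    simpa using this hx
  · obtain ⟨i, hi⟩ := Function.ne_iff.1 hu
    refine ⟨x i / u i, ?_⟩
    funext j
    have := hx (show C (u i) * X j - C (u j) * X i ∈ _ from
      mem_coneIdeal_ptIdeal.2 fun s => by simp; ring)
    rw [mem_ptIdeal] at this
    simp only [map_sub, map_mul, eval_C, eval_X] at this
    have hi' : u i ≠ 0 := hi
    simp only [Pi.smul_apply, smul_eq_mul]
    field_simp
    linear_combination this

/-- A closed cone of dimension zero is reduced to the origin. -/
lemma Dim.subset_zero {Z : Set (σ → k)} (hZ : Zar Z) (hc : IsCone Z) (h : Dim Z 0) : Z ⊆ {0} := by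
  intro v hv
  have hp := ptIdeal_isPrime v
  have h1 := eq_ptIdeal_of_cle_zero (coneIdeal_isPrime hp) (coneIdeal_le_zero hp)
    (h _ (coneIdeal_isPrime hp) (coneIdeal_le_zero hp)
      (VP_coneIdeal_subset hp hZ hc (by rw [VP_ptIdeal]; simpa using hv)))
  have h2 : v ∈ VP (coneIdeal (ptIdeal v)) := subset_VP_coneIdeal hp (by rw [VP_ptIdeal]; rfl)
  rwa [h1, VP_ptIdeal] at h2

/-- If a prime `Q` cuts out a cone inside a set of dimension at most one, then a nonzero point of
`V(Q)` spans it. -/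
lemma VP_subset_line {Z : Set (σ → k)} (h : Dim Z 1) {Q : Ideal (MvPolynomial σ k)}
    (hQ : Q.IsPrime) (hQZ : VP Q ⊆ Z) {u : σ → k} (hu0 : u ≠ 0) (hu : ∀ s : k, s • u ∈ VP Q) :
    VP Q ⊆ {x | ∃ s : k, x = s • u} := by
  have hp := ptIdeal_isPrime u
  have hle : Q ≤ coneIdeal (ptIdeal u) := fun f hf => mem_coneIdeal_ptIdeal.2 fun s => hu s hf
  have hQ0 : (0 : σ → k) ∈ VP Q := by simpa using hu 0
  rcases hle.eq_or_lt with h1 | h1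
  · rw [h1]; exact VP_coneIdeal_ptIdeal u
  · exfalso
    have h2 := (h Q hQ hQ0 hQZ).of_lt hQ h1
    have h3 := eq_ptIdeal_of_cle_zero (coneIdeal_isPrime hp) (coneIdeal_le_zero hp) h2
    have h4 : u ∈ VP (coneIdeal (ptIdeal u)) := subset_VP_coneIdeal hp (by rw [VP_ptIdeal]; rfl)
    rw [h3, VP_ptIdeal] at h4
    exact hu0 h4

/-- The dimension of a closed cone bounds the local dimension of its irreducible closed subsets at
all of their points. -/
lemma Dim.cle {Z : Set (σ → k)} (hZ : Zar Z) (hc : IsCone Z) {d : ℕ} (h : Dim Z d)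
    {P : Ideal (MvPolynomial σ k)} (hP : P.IsPrime) (hPZ : VP P ⊆ Z) {x : σ → k} (hx : x ∈ VP P) :
    Cle x P d :=
  ((h _ (coneIdeal_isPrime hP) (coneIdeal_le_zero hP) (VP_coneIdeal_subset hP hZ hc hPZ)).transfer
    (coneIdeal_isPrime hP) (coneIdeal_le_zero hP) (subset_VP_coneIdeal hP hx)).mono
    (coneIdeal_le hP) le_rfl

/-- A general linear form vanishing at `u` lowers the dimension of a closed set containing nothing
of top dimension inside the line of `u`. -/
lemma Dim.exists_form {Z : Set (σ → k)} (hZ : Zar Z) {d : ℕ} (h : Dim Z (d + 1)) (u : σ → k)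
    (hu : Dim {x | ∃ s : k, x = s • u} d) :
    ∃ l : (σ → k) →ₗ[k] k, l u = 0 ∧ Dim (Z ∩ {x | l x = 0}) d := by
  classical
  obtain ⟨S, hS⟩ := hZ
  let I := Ideal.span S
  have hfin := Ideal.finite_minimalPrimes_of_isNoetherianRing _ I
  have := hfin.to_subtype
  let L : Submodule k (σ → k) := Submodule.span k {u}
  have hmemL : ∀ x, x ∈ L ↔ ∃ s : k, x = s • u := fun x => by
    simp only [L, Submodule.mem_span_singleton, eq_comm]
  -- one point off the line for each component that is not contained in the line
  let ι := {P : I.minimalPrimes // ¬ VP P.1 ⊆ {x | ∃ s : k, x = s • u}}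
  have hch : ∀ P : ι, ∃ v, v ∈ VP P.1.1 ∧ L.mkQ v ≠ 0 := fun P => by
    obtain ⟨v, hv, hv2⟩ := Set.not_subset.1 P.2
    refine ⟨v, hv, fun h0 => hv2 ?_⟩
    rw [Submodule.mkQ_apply, Submodule.Quotient.mk_eq_zero] at h0
    exact (hmemL v).1 h0
  choose v hv hv2 using hch
  have : Infinite k := IsAlgClosed.instInfinite
  obtain ⟨l, hl⟩ := Module.exists_dual_forall_apply_ne_zero (K := k) (fun P : ι => L.mkQ (v P)) hv2
  refine ⟨l.comp L.mkQ, ?_, ?_⟩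
  · have : L.mkQ u = 0 := by
      rw [Submodule.mkQ_apply, Submodule.Quotient.mk_eq_zero]
      exact Submodule.mem_span_singleton_self u
    simp [this]
  · intro P hP hP0 hPZ
    have hIP : I ≤ P := by
      refine Ideal.span_le.2 fun f hf => mem_of_forall_VP hP fun x hx => ?_
      exact (hS x).1 (hPZ hx).1 f hf
    obtain ⟨P0, hP0m, hP0P⟩ := Ideal.exists_minimalPrimes_le hIP
    have hP0p : P0.IsPrime := hP0m.1.1
    by_cases hline : VP P0 ⊆ {x | ∃ s : k, x = s • u}
    · exact (hu P0 hP0p (hP0P.trans hP0) hline).mono hP0P le_rfl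
    · have hlt : P0 < P := by
        refine lt_of_le_of_ne hP0P fun heq => ?_
        have h1 := hl ⟨⟨P0, hP0m⟩, hline⟩
        have h2 := hv ⟨⟨P0, hP0m⟩, hline⟩
        exact h1 (hPZ (heq ▸ h2)).2
      refine (h P0 hP0p (hP0P.trans hP0) fun x hx => ?_).of_lt hP0p hlt
      rw [hS]
      exact fun f hf => hx (hP0m.1.2 (Ideal.subset_span hf))

/-- Fewer than `card σ` polynomial functions vanishing at the origin have another common zero. -/
lemma exists_common_zero {m : ℕ} (hm : m < Nat.card σ) (f : Fin m → (σ → k) → k)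
    (hf : ∀ i, IsPoly (f i)) (hf0 : ∀ i, f i 0 = 0) : ∃ x, x ≠ 0 ∧ ∀ i, f i x = 0 := by
  by_contra hcon
  push Not at hcon
  have key : ∀ j ≤ m, Dim {x : σ → k | ∀ i : Fin m, i.1 < m - j → f i x = 0} j := by
    intro j
    induction j with
    | zero =>
      intro _
      refine Dim.zero.mono (fun x hx => ?_) le_rfl
      by_contra hx0
      obtain ⟨i, hi⟩ := hcon x hx0
      exact hi (hx i (by have := i.2; omega))
    | succ j ih =>
      intro hj
      refine Dim.of_cut (hf ⟨m - (j + 1), by omega⟩) (hf0 _) ((ih (by omega)).mono ?_ le_rfl)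
      rintro x ⟨hx1, hx2⟩ i hi
      by_cases h : i.1 < m - (j + 1)
      · exact hx1 i h
      · have : i = ⟨m - (j + 1), by omega⟩ := by
          ext; simp; omega
        rw [this]; exact hx2
  have h1 := key m le_rfl
  have := le_of_cle_bot (h1 ⊥ Ideal.isPrime_bot bot_le (fun x _ i hi => by omega))
  omega

end Dimension

/-! ### Polynomial maps and smooth cubic forms -/

section Pullback
variable {k : Type*} [Field k] {σ τ : Type*}

/-- A map into affine space all of whose coordinates are polynomial. -/
def PolyVec (a : (σ → k) → (τ → k)) : Prop := ∀ i, IsPoly fun x => a x i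

lemma PolyVec.const (u : τ → k) : PolyVec (fun _ : σ → k => u) := fun _ => IsPoly.const _
lemma PolyVec.id : PolyVec (fun x : σ → k => x) := fun i => IsPoly.coord i
lemma PolyVec.smul {f : (σ → k) → k} {a : (σ → k) → (τ → k)} (hf : IsPoly f) (ha : PolyVec a) :
    PolyVec fun x => f x • a x := fun i => hf.mul (ha i)
lemma PolyVec.sub {a b : (σ → k) → (τ → k)} (ha : PolyVec a) (hb : PolyVec b) :
    PolyVec fun x => a x - b x := fun i => (ha i).sub (hb i)

/-- Pulling back polynomial functions along a polynomial map. -/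
lemma exists_pull {a : (τ → k) → (σ → k)} (ha : PolyVec a) :
    ∃ ψ : MvPolynomial σ k →ₐ[k] MvPolynomial τ k, ∀ t f, eval t (ψ f) = eval (a t) f := by
  choose p hp using ha
  refine ⟨aeval p, fun t f => ?_⟩
  have : (aeval (R := k) t).comp (aeval (R := k) p) = aeval (R := k) (a t) := by
    ext i; simp [aeval_eq_eval, hp]
  have := DFunLike.congr_fun this f
  simpa [aeval_eq_eval] using this

lemma PolyVec.linear [Finite τ] (L : (τ → k) →ₗ[k] (σ → k)) : PolyVec fun x => L x :=
  fun i => IsPoly.linear ((LinearMap.proj i).comp L)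

/-- The restriction of a polynomial to the line `s ↦ w + s • t`. -/
noncomputable def lineP (w t : σ → k) (f : MvPolynomial σ k) : Polynomial k :=
  aeval (fun i => Polynomial.C (w i) + Polynomial.C (t i) * Polynomial.X) f

lemma eval_lineP (w t : σ → k) (f : MvPolynomial σ k) (s : k) :
    (lineP w t f).eval s = eval (w + s • t) f := by
  have : (Polynomial.aeval s).comp
      (aeval (R := k) (fun i => Polynomial.C (w i) + Polynomial.C (t i) * Polynomial.X)) =
      aeval (R := k) (w + s • t) := by
    ext i; simp; ring
  have := DFunLike.congr_fun this f
  simpa [aeval_eq_eval, Polynomial.coe_aeval_eq_eval, lineP] using this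

lemma lineP_mul (w t : σ → k) (f g : MvPolynomial σ k) :
    lineP w t (f * g) = lineP w t f * lineP w t g := by simp [lineP]

end Pullback

/-- The polarization `T` of a smooth cubic form `6 F(v) = T v v v`: a symmetric trilinear form such
that no nonzero `v` is orthogonal to everything along `T v v`, over a field of characteristic
different from `2` and `3`. -/
structure SmoothCubic (k : Type*) [Field k] (n : ℕ) where
  /-- the trilinear form -/
  T : (Fin n → k) →ₗ[k] (Fin n → k) →ₗ[k] (Fin n → k) →ₗ[k] k
  swap12 : ∀ u v w, T u v w = T v u w
  swap23 : ∀ u v w, T u v w = T u w v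
  smooth : ∀ v, v ≠ 0 → ∃ w, T v v w ≠ 0
  two_ne : (2 : k) ≠ 0
  three_ne : (3 : k) ≠ 0

namespace SmoothCubic
variable {k : Type*} [Field k] {n : ℕ} (c : SmoothCubic k n) {σ : Type*}

lemma isPoly {a b d : (σ → k) → (Fin n → k)} (ha : PolyVec a) (hb : PolyVec b) (hd : PolyVec d) :
    IsPoly fun x => c.T (a x) (b x) (d x) := by
  have h : ∀ u v w, c.T u v w = ∑ i, u i * ∑ j, v j * ∑ l, w l *
      c.T (fun a => if i = a then 1 else 0) (fun a => if j = a then 1 else 0)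
        (fun a => if l = a then 1 else 0) := by
    intro u v w
    rw [LinearMap.pi_apply_eq_sum_univ c.T u, LinearMap.sum_apply, LinearMap.sum_apply]
    refine Finset.sum_congr rfl fun i _ => ?_
    rw [LinearMap.smul_apply, LinearMap.smul_apply, smul_eq_mul,
      LinearMap.pi_apply_eq_sum_univ (c.T _) v, LinearMap.sum_apply]
    congr 1
    refine Finset.sum_congr rfl fun j _ => ?_
    rw [LinearMap.smul_apply, smul_eq_mul, LinearMap.pi_apply_eq_sum_univ (c.T _ _) w]
    rfl
  rw [show (fun x => c.T (a x) (b x) (d x)) = _ from funext fun x => h _ _ _]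
  exact IsPoly.sum _ fun i _ => (ha i).mul (IsPoly.sum _ fun j _ => (hb j).mul
    (IsPoly.sum _ fun l _ => (hd l).mul (IsPoly.const _)))

/-- The cone over the cubic hypersurface. -/
def cubic : Set (Fin n → k) := {v | c.T v v v = 0}

/-- The points of the cubic lying on a line of the cubic through `p`: for `p` on the cubic, the
coefficients of `F(p + s v)` vanish. -/
def Cp (p : Fin n → k) : Set (Fin n → k) := {v | c.T p p v = 0 ∧ c.T p v v = 0 ∧ c.T v v v = 0}

lemma zar_cubic : Zar c.cubic := Zar.of_poly (c.isPoly .id .id .id)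

lemma cone_cubic : IsCone c.cubic := by
  intro v hv s
  have hv : c.T v v v = 0 := hv
  change c.T (s • v) (s • v) (s • v) = 0
  simp [hv]

lemma zar_Cp (p : Fin n → k) : Zar (c.Cp p) :=
  (Zar.of_poly (c.isPoly (.const p) (.const p) .id)).inter
    ((Zar.of_poly (c.isPoly (.const p) .id .id)).inter c.zar_cubic)

lemma cone_Cp (p : Fin n → k) : IsCone (c.Cp p) := by
  rintro v ⟨h1, h2, h3⟩ s
  simp [Cp, h1, h2, h3]

/-- The restriction of the cubic form to a tangent hyperplane (more generally to any hyperplane) is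
not a product of two polynomials vanishing at the origin: the cubic would be singular at a common
zero of both factors and of one further derivative. -/
lemma key [IsAlgClosed k] (hn : 5 ≤ n) (l : (Fin n → k) →ₗ[k] k)
    (L : (Fin (n - 1) → k) →ₗ[k] (Fin n → k)) (hL : Function.Injective L)
    (hLl : ∀ v, l v = 0 ↔ ∃ t, L t = v) (hl : l ≠ 0)
    (g h : MvPolynomial (Fin (n - 1)) k) (hg : eval 0 g = 0) (hh : eval 0 h = 0)
    (hF : ∀ t, c.T (L t) (L t) (L t) = eval t g * eval t h) : False := by
  obtain ⟨z, hz⟩ : ∃ z, l z ≠ 0 := by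
    by_contra hcon
    push Not at hcon
    exact hl (LinearMap.ext hcon)
  have hPL := PolyVec.linear L
  obtain ⟨w, hw0, hw⟩ := exists_common_zero (σ := Fin (n - 1)) (m := 3) (by simp; omega)
    ![fun t => eval t g, fun t => eval t h, fun t => c.T (L t) (L t) z]
    (by
      intro i
      fin_cases i
      · exact ⟨g, fun _ => rfl⟩
      · exact ⟨h, fun _ => rfl⟩
      · exact c.isPoly hPL hPL (.const z))
    (by
      intro i
      fin_cases i
      · exact hg
      · exact hh
      · simp)
  have hwg : eval w g = 0 := hw 0
  have hwh : eval w h = 0 := hw 1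
  have hwz : c.T (L w) (L w) z = 0 := hw 2
  have hv0 : L w ≠ 0 := fun h0 => hw0 (hL (by rw [h0, map_zero]))
  obtain ⟨u, hu⟩ := c.smooth _ hv0
  -- the derivative of the product vanishes along the hyperplane
  have hT : ∀ t, c.T (L w) (L w) (L t) = 0 := by
    intro t
    have : Infinite k := IsAlgClosed.instInfinite
    have h1 : lineP w t g * lineP w t h = Polynomial.C (c.T (L w) (L w) (L w)) +
        Polynomial.C (3 * c.T (L w) (L w) (L t)) * Polynomial.X +
        Polynomial.C (3 * c.T (L w) (L t) (L t)) * Polynomial.X ^ 2 +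
        Polynomial.C (c.T (L t) (L t) (L t)) * Polynomial.X ^ 3 := by
      refine Polynomial.funext fun s => ?_
      simp only [Polynomial.eval_mul, eval_lineP, ← hF, Polynomial.eval_add, Polynomial.eval_C,
        Polynomial.eval_X, Polynomial.eval_pow, map_add, map_smul, LinearMap.add_apply,
        LinearMap.smul_apply, smul_eq_mul]
      have e1 := c.swap23 (L w) (L t) (L w)
      have e2 := c.swap12 (L t) (L w) (L w)
      have e3 := c.swap12 (L t) (L w) (L t)
      have e4 := c.swap23 (L t) (L t) (L w)
      linear_combination s * e1 + s * e2 + s * e1 + 2 * s ^ 2 * e3 + s ^ 2 * e4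
    have h2 := congrArg (fun p => Polynomial.coeff p 1) h1
    have hg0 : (lineP w t g).coeff 0 = 0 := by
      rw [Polynomial.coeff_zero_eq_eval_zero, eval_lineP]; simpa using hwg
    have hh0 : (lineP w t h).coeff 0 = 0 := by
      rw [Polynomial.coeff_zero_eq_eval_zero, eval_lineP]; simpa using hwh
    simp [Polynomial.mul_coeff_one, hg0, hh0, Polynomial.coeff_C, Polynomial.coeff_X_pow,
      c.three_ne] at h2
    exact h2
  apply hu
  obtain ⟨t, ht⟩ := (hLl (u - (l u / l z) • z)).1 (by simp [hz])
  have : u = L t + (l u / l z) • z := by rw [ht]; abel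
  rw [this, map_add, map_smul, hT, hwz]
  simp

lemma exists_param (hn : 5 ≤ n) (l : (Fin n → k) →ₗ[k] k) (hl : l ≠ 0) :
    ∃ L : (Fin (n - 1) → k) →ₗ[k] (Fin n → k), Function.Injective L ∧
      ∀ v, l v = 0 ↔ ∃ t, L t = v := by
  have h1 := Module.Dual.finrank_ker_add_one_of_ne_zero (f := l) hl
  have h2 : Module.finrank k (Fin (n - 1) → k) = Module.finrank k (LinearMap.ker l) := by
    rw [Module.finrank_fin_fun] at h1 ⊢
    omega
  let e := LinearEquiv.ofFinrankEq _ _ h2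
  refine ⟨(LinearMap.ker l).subtype.comp e.toLinearMap,
    Subtype.val_injective.comp e.injective, fun v => ⟨fun hv => ?_, ?_⟩⟩
  · exact ⟨e.symm ⟨v, hv⟩, by simp⟩
  · rintro ⟨t, rfl⟩
    exact (e t).2

end SmoothCubic

/-! ### Lines of the cubic through a point -/

namespace SmoothCubic
variable {k : Type*} [Field k] {n : ℕ} (c : SmoothCubic k n) {σ : Type*}

/-- The points `p` of the cubic whose tangent cone degenerates: the quadratic form `T p y y`
vanishes on the tangent hyperplane `T p p y = 0`. The vectors `T p p w • z - T p p z • w`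
fill that hyperplane. -/
def Eck : Set (Fin n → k) := {p | c.T p p p = 0 ∧ ∀ w z,
  c.T p (c.T p p w • z - c.T p p z • w) (c.T p p w • z - c.T p p z • w) = 0}

lemma zar_Eck : Zar c.Eck := by
  refine c.zar_cubic.inter (Zar.forall fun w => Zar.forall fun z => Zar.of_poly ?_)
  have h : PolyVec fun p : Fin n → k => c.T p p w • z - c.T p p z • w :=
    (PolyVec.smul (c.isPoly .id .id (.const w)) (.const z)).sub
      (PolyVec.smul (c.isPoly .id .id (.const z)) (.const w))
  exact c.isPoly .id h h

lemma cone_Eck : IsCone c.Eck := by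
  rintro p ⟨h1, h2⟩ s
  refine ⟨by simp [h1], fun w z => ?_⟩
  have : c.T (s • p) (s • p) w • z - c.T (s • p) (s • p) z • w =
      (s * s) • (c.T p p w • z - c.T p p z • w) := by
    simp only [map_smul, LinearMap.smul_apply, smul_eq_mul, smul_sub, smul_smul, mul_assoc]
  rw [this]
  simp only [map_smul, LinearMap.smul_apply, h2, smul_zero]

variable [IsAlgClosed k]

lemma dim_cubic (hn : 5 ≤ n) : Dim c.cubic (n - 1) := by
  intro P hP h0 hPZ
  have hlt : (⊥ : Ideal (MvPolynomial (Fin n) k)) < P := by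
    refine bot_lt_iff_ne_bot.2 fun hbot => ?_
    have hall : ∀ v, c.T v v v = 0 := fun v => hPZ (show v ∈ VP P by rw [hbot]; exact (bot_le : ⊥ ≤ ptIdeal v))
    obtain ⟨z, hz⟩ : ∃ z : Fin n → k, z ≠ 0 := by
      have : Nonempty (Fin n) := ⟨⟨0, by omega⟩⟩
      exact exists_ne 0
    obtain ⟨l, hl⟩ := c.smooth z hz
    have hl0 : c.T z z ≠ 0 := fun h => hl (by rw [h]; rfl)
    obtain ⟨L, hL, hLl⟩ := exists_param hn _ hl0
    exact c.key hn _ L hL hLl hl0 0 0 (by simp) (by simp) (fun t => by simp [hall])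
  have h1 := (Cle.bot (0 : Fin n → k)).mono le_rfl
    (show Nat.card (Fin n) ≤ (n - 1) + 1 by simp; omega)
  exact h1.of_lt Ideal.isPrime_bot hlt

lemma form_ne_zero {p : Fin n → k} (hp : p ≠ 0) : c.T p p ≠ 0 := by
  obtain ⟨w, hw⟩ := c.smooth p hp
  exact fun h => hw (by rw [h]; rfl)

/-- Setup for the bounds on `Cp p`: a prime cutting out a subset of `Cp p` contains the prime
`K` of the tangent hyperplane, and differs from it. -/
lemma exists_hyperplane (hn : 5 ≤ n) {p : Fin n → k} (hp : p ≠ 0) :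
    ∃ (L : (Fin (n - 1) → k) →ₗ[k] (Fin n → k))
      (ψ : MvPolynomial (Fin n) k →ₐ[k] MvPolynomial (Fin (n - 1)) k),
      Function.Injective L ∧ (∀ v, c.T p p v = 0 ↔ ∃ t, L t = v) ∧
      (∀ t f, eval t (ψ f) = eval (L t) f) ∧ Function.Surjective ψ ∧
      Cle 0 (RingHom.ker ψ.toRingHom) (n - 1) ∧
      ∀ P : Ideal (MvPolynomial (Fin n) k), P.IsPrime → VP P ⊆ c.Cp p →
        RingHom.ker ψ.toRingHom < P := by
  have hl0 := c.form_ne_zero hp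
  obtain ⟨L, hL, hLl⟩ := exists_param hn _ hl0
  obtain ⟨ψ, hψ⟩ := exists_pull (PolyVec.linear L)
  have hinf : Infinite k := IsAlgClosed.instInfinite
  refine ⟨L, ψ, hL, hLl, hψ, ?_, ?_, ?_⟩
  · obtain ⟨M, hM⟩ := L.exists_leftInverse_of_injective (LinearMap.ker_eq_bot.2 hL)
    obtain ⟨θ, hθ⟩ := exists_pull (PolyVec.linear M)
    intro f
    refine ⟨θ f, MvPolynomial.funext fun t => ?_⟩
    rw [hψ, hθ]
    have := LinearMap.congr_fun hM t
    simp only [LinearMap.comp_apply, LinearMap.id_apply] at this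
    rw [this]
  · have h1 := (Cle.bot (0 : Fin n → k)).mono le_rfl
      (show Nat.card (Fin n) ≤ (n - 1) + 1 by simp; omega)
    refine h1.of_lt Ideal.isPrime_bot (bot_lt_iff_ne_bot.2 fun hbot => ?_)
    obtain ⟨pl, hpl⟩ := IsPoly.linear (c.T p p)
    have hmem : pl ∈ RingHom.ker ψ.toRingHom := by
      refine MvPolynomial.funext fun t => ?_
      rw [map_zero]
      exact (hψ t pl).trans ((hpl _).trans ((hLl _).2 ⟨t, rfl⟩))
    rw [hbot, Ideal.mem_bot] at hmem
    refine hl0 (LinearMap.ext fun x => ?_)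
    refine (hpl x).symm.trans ?_
    rw [hmem]
    simp
  · intro P hP hPC
    have hle : RingHom.ker ψ.toRingHom ≤ P := by
      intro f hf
      refine mem_of_forall_VP hP fun x hx => ?_
      obtain ⟨t, rfl⟩ := (hLl x).1 (hPC hx).1
      rw [← hψ, show ψ f = 0 from hf, map_zero]
    refine lt_of_le_of_ne hle fun heq => ?_
    refine c.key hn _ L hL hLl hl0 0 0 (by simp) (by simp) fun t => ?_
    have : L t ∈ VP P := by
      rw [← heq]
      intro f hf
      rw [mem_ptIdeal, ← hψ, show ψ f = 0 from hf, map_zero]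
    rw [(hPC this).2.2]
    simp

/-- The components of `Cp p` are proper subsets of the tangent hyperplane at `p`, since the cubic form
does not vanish on a hyperplane. -/
lemma dim_Cp (hn : 5 ≤ n) {p : Fin n → k} (hp : p ≠ 0) : Dim (c.Cp p) (n - 2) := by
  intro P hP h0 hPC
  obtain ⟨L, ψ, hL, hLl, hψ, hsurj, hcle, hlt⟩ := c.exists_hyperplane hn hp
  exact (hcle.mono le_rfl (show n - 1 ≤ (n - 2) + 1 by omega)).of_lt (RingHom.ker_isPrime _)
    (hlt P hP hPC)

/-- Outside `Eck` the tangent quadric is a proper hypersurface of the tangent hyperplane, and none of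
its components lies on the cubic: by `key`, the restriction of the cubic form has no proper
factor vanishing at the origin, and for degree reasons it does not divide the quadric. -/
lemma dim_Cp_of_not_mem (hn : 5 ≤ n) {p : Fin n → k} (hp : p ≠ 0) (hpc : p ∈ c.cubic)
    (hpe : p ∉ c.Eck) : Dim (c.Cp p) (n - 3) := by
  intro P hP h0 hPC
  obtain ⟨L, ψ, hL, hLl, hψ, hsurj, hcle, hlt⟩ := c.exists_hyperplane hn hp
  have hl0 := c.form_ne_zero hp
  have hinf : Infinite k := IsAlgClosed.instInfinite
  obtain ⟨y, hy1, hy2⟩ : ∃ y, c.T p p y = 0 ∧ c.T p y y ≠ 0 := by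
    by_contra hcon
    push Not at hcon
    exact hpe ⟨hpc, fun w z => hcon _ (by simp [mul_comm])⟩
  obtain ⟨pQ, hQ : ∀ x, eval x pQ = c.T p x x⟩ := c.isPoly (σ := Fin n) (.const p) .id .id
  obtain ⟨pF, hF : ∀ x, eval x pF = c.T x x x⟩ := c.isPoly (σ := Fin n) .id .id .id
  have hQP : pQ ∈ P := mem_of_forall_VP hP fun x hx => by rw [hQ]; exact (hPC hx).2.1
  have hFP : pF ∈ P := mem_of_forall_VP hP fun x hx => by rw [hF]; exact (hPC hx).2.2
  have hQ0 : ψ pQ ≠ 0 := by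
    obtain ⟨t, rfl⟩ := (hLl y).1 hy1
    intro h
    apply hy2
    rw [← hQ, ← hψ, h, map_zero]
  have hP'p : (P.map ψ.toRingHom).IsPrime :=
    Ideal.map_isPrime_of_surjective hsurj (hlt P hP hPC).le
  have hcm : (P.map ψ.toRingHom).comap ψ.toRingHom = P := by
    have hs : Function.Surjective ψ.toRingHom := hsurj
    rw [Ideal.comap_map_of_surjective' _ hs]
    exact sup_eq_left.2 (hlt P hP hPC).le
  -- an irreducible factor of the tangent quadric that vanishes on `V(P)`
  obtain ⟨g, hgp, hgP, hgQ⟩ : ∃ g, Prime g ∧ g ∈ P.map ψ.toRingHom ∧ g ∣ ψ pQ := by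
    obtain ⟨s, hs1, hs2⟩ := UniqueFactorizationMonoid.exists_prime_factors (ψ pQ) hQ0
    have h1 : s.prod ∈ P.map ψ.toRingHom := by
      obtain ⟨u, hu⟩ := hs2.symm
      rw [← hu]
      exact Ideal.mul_mem_right _ _ (Ideal.mem_map_of_mem ψ.toRingHom hQP)
    obtain ⟨g, hg1, hg2⟩ := (hP'p.multiset_prod_mem_iff_exists_mem s).1 h1
    exact ⟨g, hs1 g hg1, hg2, (Multiset.dvd_prod hg1).trans hs2.dvd⟩
  have hgprime : (Ideal.span {g}).IsPrime := (Ideal.span_singleton_prime hgp.ne_zero).2 hgp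
  have hP1 : ((Ideal.span {g}).comap ψ.toRingHom).IsPrime := Ideal.comap_isPrime _ _
  have hlt1 : RingHom.ker ψ.toRingHom < (Ideal.span {g}).comap ψ.toRingHom := by
    refine lt_of_le_of_ne (Ideal.comap_mono bot_le) fun heq => hQ0 ?_
    have : pQ ∈ (Ideal.span {g}).comap ψ.toRingHom := Ideal.mem_span_singleton.2 hgQ
    rw [← heq] at this
    exact this
  have hle2 : (Ideal.span {g}).comap ψ.toRingHom ≤ P := by
    rw [← hcm]
    exact Ideal.comap_mono ((Ideal.span_singleton_le_iff_mem _).2 hgP)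
  have h1 := (hcle.mono le_rfl (show n - 1 ≤ (n - 3) + 1 + 1 by omega)).of_lt
    (RingHom.ker_isPrime _) hlt1
  rcases hle2.eq_or_lt with heq | hlt2
  swap
  · exact h1.of_lt hP1 hlt2
  exfalso
  rw [← heq] at hFP
  obtain ⟨h, hh⟩ : g ∣ ψ pF := Ideal.mem_span_singleton.1 hFP
  obtain ⟨g2, hg2⟩ := hgQ
  have hFL : ∀ t, eval t (ψ pF) = c.T (L t) (L t) (L t) := fun t => by rw [hψ, hF]
  have hQL : ∀ t, eval t (ψ pQ) = c.T p (L t) (L t) := fun t => by rw [hψ, hQ]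
  by_cases hF0 : ψ pF = 0
  · exact c.key hn _ L hL hLl hl0 0 0 (by simp) (by simp) fun t => by rw [← hFL, hF0]; simp
  have hg0 : eval 0 g = 0 := by
    have hle : P.map ψ.toRingHom ≤ ptIdeal 0 := by
      refine Ideal.map_le_iff_le_comap.2 fun f hf => ?_
      have h2 : eval 0 f = 0 := h0 hf
      rw [Ideal.mem_comap, mem_ptIdeal]
      exact (hψ 0 f).trans (by rw [map_zero]; exact h2)
    exact hle hgP
  refine c.key hn _ L hL hLl hl0 g h hg0 ?_ fun t => by rw [← hFL, hh, map_mul]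
  -- restrict to a general line through the origin and compare degrees
  by_contra hh0
  obtain ⟨t, ht⟩ : ∃ t, eval t (ψ pF * ψ pQ) ≠ 0 := by
    by_contra hcon
    push Not at hcon
    exact mul_ne_zero hF0 hQ0 (MvPolynomial.funext fun t => by rw [hcon, map_zero])
  rw [map_mul] at ht
  have htF := left_ne_zero_of_mul ht
  have htQ := right_ne_zero_of_mul ht
  have e1 : lineP 0 t (ψ pF) = Polynomial.C (eval t (ψ pF)) * Polynomial.X ^ 3 := by
    refine Polynomial.funext fun s => ?_
    simp [eval_lineP, hFL]
    ring
  have e2 : lineP 0 t (ψ pQ) = Polynomial.C (eval t (ψ pQ)) * Polynomial.X ^ 2 := by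
    refine Polynomial.funext fun s => ?_
    simp [eval_lineP, hQL]
    ring
  rw [hh, lineP_mul, ← hh] at e1
  rw [hg2, lineP_mul, ← hg2] at e2
  have hd : (lineP 0 t g).natDegree ≤ 2 := by
    have hne : Polynomial.C (eval t (ψ pQ)) * Polynomial.X ^ 2 ≠ 0 :=
      mul_ne_zero (by simpa using htQ) (by simp)
    have := Polynomial.natDegree_le_of_dvd (Dvd.intro _ e2) hne
    rwa [Polynomial.natDegree_C_mul_X_pow _ _ htQ] at this
  have hX : Polynomial.X ^ 3 ∣ lineP 0 t g := by
    refine Polynomial.prime_X.pow_dvd_of_dvd_mul_right 3 ?_ (Dvd.intro_left _ e1.symm)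
    rw [Polynomial.X_dvd_iff, Polynomial.coeff_zero_eq_eval_zero, eval_lineP]
    simpa using hh0
  have hgne : lineP 0 t g ≠ 0 := by
    intro h3
    rw [h3, zero_mul] at e2
    exact mul_ne_zero (by simpa using htQ) (by simp) e2.symm
  have := Polynomial.natDegree_le_of_dvd hX hgne
  rw [Polynomial.natDegree_X_pow] at this
  omega

end SmoothCubic

/-! ### Degenerate points of the cubic -/

namespace SmoothCubic
variable {k : Type*} [Field k] {n : ℕ} (c : SmoothCubic k n) {σ : Type*}

/-- The polarized condition defining `Eck`, written out. -/
lemma eck_polar {q : Fin n → k} (hq : q ∈ c.Eck) (w y z : Fin n → k) :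
    c.T q q w ^ 2 * c.T q y z - c.T q q w * c.T q q z * c.T q y w
      - c.T q q w * c.T q q y * c.T q w z + c.T q q y * c.T q q z * c.T q w w = 0 := by
  have h1 := hq.2 w y
  have h2 := hq.2 w z
  have h3 := hq.2 w (y + z)
  simp only [map_add, map_sub, map_smul, LinearMap.add_apply, LinearMap.sub_apply,
    LinearMap.smul_apply, smul_eq_mul, smul_add, add_smul] at h1 h2 h3
  have e1 := c.swap23 q z y
  have e2 := c.swap23 q w y
  have e3 := c.swap23 q w z
  have := c.two_ne
  refine mul_left_cancel₀ this ?_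
  linear_combination h3 - h1 - h2 + c.T q q w * c.T q q z * e2 - c.T q q w * c.T q q y * e3
    - c.T q q w ^ 2 * e1

variable [IsAlgClosed k]

/-- A smooth cubic has finitely many degenerate points. On a component of `Eck` through `p`, with
`T p p w = 1`, the polarized condition forces `T v v = T v v w • T p p`: the Gauss map is constant,
so that one equation `T v v w = 0` cuts the component down to `0` by smoothness. -/
lemma dim_Eck : Dim c.Eck 1 := by
  intro P hP h0 hPE
  by_cases hz : VP P ⊆ {0}
  · exact (Dim.zero P hP h0 hz).mono le_rfl zero_le_one
  obtain ⟨p, hpP, hp0⟩ := Set.not_subset.1 hz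
  obtain ⟨w, hw⟩ : ∃ w, c.T p p w = 1 := by
    obtain ⟨w, hw⟩ := c.smooth p hp0
    exact ⟨(c.T p p w)⁻¹ • w, by simp [hw]⟩
  have hpp : c.T p p p = 0 := (hPE hpP).1
  have hid : PolyVec (fun v : Fin n → k => v) := .id
  have hcp := PolyVec.const (σ := Fin n) p
  have hcw := PolyVec.const (σ := Fin n) w
  -- the tangent hyperplane at `p` contains all of `V(P)`
  have hs' : ∀ v ∈ VP P, c.T p v v = c.T p p v * (2 * c.T p v w - c.T p p v * c.T p w w) := by
    intro v _
    have h := c.eck_polar (hPE hpP) w v v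
    have e := c.swap23 p w v
    rw [hw, e] at h
    linear_combination h
  have hs : ∀ v ∈ VP P, c.T p p v = 0 := by
    have hB : IsPoly fun v : Fin n → k => 2 * c.T p v w - c.T p p v * c.T p w w :=
      ((IsPoly.const 2).mul (c.isPoly hcp hid hcw)).sub ((c.isPoly hcp hcp hid).mul (.const _))
    have hw1 := c.isPoly (σ := Fin n) hid hid hcw
    refine (VP_mul_eq_zero hP (f := fun v => c.T p p v)
      (g := fun v => c.T v v w * c.T v v w
        - 2 * c.T v v w * (2 * c.T p v w - c.T p p v * c.T p w w) * c.T p v w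
        + c.T p p v * (2 * c.T p v w - c.T p p v * c.T p w w)
          * (2 * c.T p v w - c.T p p v * c.T p w w) * c.T v w w)
      (c.isPoly hcp hcp hid)
      (((hw1.mul hw1).sub ((((IsPoly.const 2).mul hw1).mul hB).mul (c.isPoly hcp hid hcw))).add
        ((((c.isPoly hcp hcp hid).mul hB).mul hB).mul (c.isPoly hid hcw hcw))) ?_).resolve_right ?_
    · intro v hv
      have h := c.eck_polar (hPE hv) w p p
      have e1 : c.T v v p = c.T p p v * (2 * c.T p v w - c.T p p v * c.T p w w) := by
        rw [c.swap23, c.swap12, hs' v hv]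
      have e2 : c.T v p p = c.T p p v := by rw [c.swap12, c.swap23]
      have e3 := c.swap12 v p w
      have e4 : c.T v w p = c.T p v w := by rw [c.swap23, c.swap12]
      rw [e1, e2, e3, e4] at h
      linear_combination h
    · -- at `v = p` the second factor is `1 - 4 = -3`
      intro h
      have h1 := h p hpP
      simp only [hw, hpp] at h1
      exact c.three_ne (by linear_combination -h1)
  have hA : ∀ v ∈ VP P, ∀ z, c.T p v z = c.T p p z * c.T p v w := by
    intro v hv z
    have h := c.eck_polar (hPE hpP) w v z
    rw [hw, hs v hv] at h
    linear_combination h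
  have hL : ∀ v ∈ VP P, ∀ z, c.T v v z = c.T v v w * c.T p p z := by
    intro v hv z
    suffices h : ∀ v ∈ VP P, c.T v v z - c.T v v w * c.T p p z = 0 from sub_eq_zero.1 (h v hv)
    refine (VP_mul_eq_zero hP (f := fun v => c.T v v w * c.T p v w)
      (g := fun v => c.T v v z - c.T v v w * c.T p p z)
      ((c.isPoly hid hid hcw).mul (c.isPoly hcp hid hcw))
      ((c.isPoly hid hid (.const z)).sub ((c.isPoly hid hid hcw).mul (.const _)))
      ?_).resolve_left ?_
    · intro v hv
      have h := c.eck_polar (hPE hv) w p z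
      have e1 : c.T v v p = 0 := by
        rw [c.swap23, c.swap12, hs' v hv, hs v hv, zero_mul]
      have e2 := c.swap12 v p z
      have e3 := c.swap12 v p w
      rw [e1, e2, e3, hA v hv] at h
      linear_combination -h
    · intro h
      have := h p hpP
      simp [hw] at this
  refine Dim.of_cut (Z := {v | ∀ z, c.T v v z = c.T v v w * c.T p p z}) (d := 0)
    (f := fun v => c.T v v w) (c.isPoly hid hid hcw) (by simp) ?_ P hP h0 hL
  refine Dim.zero.mono ?_ le_rfl
  rintro v ⟨hv1, hv2⟩
  have hv2 : c.T v v w = 0 := hv2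
  by_contra hv0
  obtain ⟨z, hz⟩ := c.smooth v hv0
  exact hz (by rw [hv1 z, hv2, zero_mul])

end SmoothCubic

/-! ### The coefficient equations of polynomial tuples on the cubic -/

namespace SmoothCubic
variable {k : Type*} [Field k] {n : ℕ} (c : SmoothCubic k n) (e : ℕ)

/-- The coefficient vector `x_a` of `t ^ a` in a tuple of `n` polynomials of degree at most `e`; it
is `0` for `a > e`. -/
def ex (k : Type*) [Field k] (n e a : ℕ) : (Fin (e + 1) × Fin n → k) →ₗ[k] (Fin n → k) where
  toFun x i := if h : a < e + 1 then x (⟨a, h⟩, i) else 0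
  map_add' x y := by ext i; by_cases h : a < e + 1 <;> simp [h]
  map_smul' s x := by ext i; by_cases h : a < e + 1 <;> simp [h]

lemma ex_of_lt {a : ℕ} (h : a < e + 1) (x : Fin (e + 1) × Fin n → k) (i : Fin n) :
    ex k n e a x i = x (⟨a, h⟩, i) := by simp [ex, h]

lemma ex_of_gt {a : ℕ} (h : e < a) (x : Fin (e + 1) × Fin n → k) : ex k n e a x = 0 := by
  ext i
  have : ¬ a < e + 1 := by omega
  simp [ex, this]

/-- The indices `(a, b, c)` with `a + b + c = m`, in a range that suffices since `x_a = 0` for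
`a > e`. -/
def tri (e m : ℕ) : Finset (ℕ × ℕ × ℕ) :=
  (Finset.range (e + 3) ×ˢ Finset.range (e + 3) ×ˢ Finset.range (e + 3)).filter
    fun t => t.1 + t.2.1 + t.2.2 = m

lemma mem_tri {m : ℕ} {t : ℕ × ℕ × ℕ} : t ∈ tri e m ↔
    (t.1 < e + 3 ∧ t.2.1 < e + 3 ∧ t.2.2 < e + 3) ∧ t.1 + t.2.1 + t.2.2 = m := by
  simp [tri]

/-- The coefficient of `t ^ m` in `T (x(t), x(t), x(t))`. -/
def G (m : ℕ) (x : Fin (e + 1) × Fin n → k) : k :=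
  ∑ t ∈ tri e m, c.T (ex k n e t.1 x) (ex k n e t.2.1 x) (ex k n e t.2.2 x)

lemma isPoly_G (m : ℕ) : IsPoly (c.G e m) :=
  IsPoly.sum _ fun _ _ => c.isPoly (.linear _) (.linear _) (.linear _)

lemma G_smul (m : ℕ) (s : k) (x : Fin (e + 1) × Fin n → k) :
    c.G e m (s • x) = s ^ 3 * c.G e m x := by
  simp only [G, Finset.mul_sum, map_smul, LinearMap.smul_apply, smul_eq_mul]
  exact Finset.sum_congr rfl fun _ _ => by ring

/-- The tuples divisible by `t ^ j` that solve the cubic equation. -/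
def W (j : ℕ) : Set (Fin (e + 1) × Fin n → k) :=
  {x | (∀ m, c.G e m x = 0) ∧ ∀ a < j, ex k n e a x = 0}

variable {e}

lemma G_of_lt {m j : ℕ} {x : Fin (e + 1) × Fin n → k} (hx : ∀ a < j, ex k n e a x = 0)
    (S : Finset (ℕ × ℕ × ℕ)) (hS : S ⊆ tri e m)
    (hS' : ∀ t ∈ tri e m, j ≤ t.1 → j ≤ t.2.1 → j ≤ t.2.2 → t ∈ S) :
    c.G e m x = ∑ t ∈ S, c.T (ex k n e t.1 x) (ex k n e t.2.1 x) (ex k n e t.2.2 x) := by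
  refine (Finset.sum_subset hS fun t ht htS => ?_).symm
  by_cases h1 : j ≤ t.1
  · by_cases h2 : j ≤ t.2.1
    · by_cases h3 : j ≤ t.2.2
      · exact absurd (hS' t ht h1 h2 h3) htS
      · rw [hx t.2.2 (by omega), map_zero]
    · rw [hx t.2.1 (by omega), map_zero, LinearMap.zero_apply]
  · rw [hx t.1 (by omega), map_zero, LinearMap.zero_apply, LinearMap.zero_apply]

lemma W_zero {j : ℕ} (hj : j ≤ e) {x : Fin (e + 1) × Fin n → k} (hx : x ∈ c.W e j) :
    c.T (ex k n e j x) (ex k n e j x) (ex k n e j x) = 0 := by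
  have h := hx.1 (3 * j)
  rw [c.G_of_lt hx.2 {(j, j, j)}] at h
  · simpa using h
  · intro t ht
    simp only [Finset.mem_singleton] at ht
    subst ht
    rw [mem_tri]; dsimp; omega
  · rintro ⟨a, b, d⟩ ht h1 h2 h3
    rw [mem_tri] at ht
    simp only [Finset.mem_singleton, Prod.mk.injEq]
    dsimp at *; omega

lemma W_one {j : ℕ} (hj : j ≤ e) {x : Fin (e + 1) × Fin n → k} (hx : x ∈ c.W e j) :
    c.T (ex k n e j x) (ex k n e j x) (ex k n e (j + 1) x) = 0 := by
  have h := hx.1 (3 * j + 1)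
  rw [c.G_of_lt hx.2 {(j, j, j + 1), (j, j + 1, j), (j + 1, j, j)}] at h
  · rw [Finset.sum_insert (by simp), Finset.sum_insert (by simp), Finset.sum_singleton] at h
    dsimp only at h
    have e1 := c.swap23 (ex k n e j x) (ex k n e (j + 1) x) (ex k n e j x)
    have e2 := c.swap12 (ex k n e (j + 1) x) (ex k n e j x) (ex k n e j x)
    refine mul_left_cancel₀ c.three_ne ?_
    rw [e2, e1] at h
    linear_combination h
  · intro t ht
    simp only [Finset.mem_singleton, Finset.mem_insert] at ht
    rw [mem_tri]
    rcases ht with rfl | rfl | rfl <;> dsimp <;> omega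
  · rintro ⟨a, b, d⟩ ht h1 h2 h3
    rw [mem_tri] at ht
    simp only [Finset.mem_singleton, Finset.mem_insert, Prod.mk.injEq]
    dsimp at *; omega

lemma W_two {j : ℕ} (hj : j ≤ e) {x : Fin (e + 1) × Fin n → k} (hx : x ∈ c.W e j) :
    c.T (ex k n e j x) (ex k n e j x) (ex k n e (j + 2) x) +
      c.T (ex k n e j x) (ex k n e (j + 1) x) (ex k n e (j + 1) x) = 0 := by
  have h := hx.1 (3 * j + 2)
  rw [c.G_of_lt hx.2 {(j, j, j + 2), (j, j + 2, j), (j + 2, j, j), (j, j + 1, j + 1),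
    (j + 1, j, j + 1), (j + 1, j + 1, j)}] at h
  · rw [Finset.sum_insert (by simp), Finset.sum_insert (by simp), Finset.sum_insert (by simp),
      Finset.sum_insert (by simp), Finset.sum_insert (by simp), Finset.sum_singleton] at h
    dsimp only at h
    have e1 := c.swap23 (ex k n e j x) (ex k n e (j + 2) x) (ex k n e j x)
    have e2 := c.swap12 (ex k n e (j + 2) x) (ex k n e j x) (ex k n e j x)
    have e3 := c.swap23 (ex k n e (j + 1) x) (ex k n e (j + 1) x) (ex k n e j x)
    have e4 := c.swap12 (ex k n e (j + 1) x) (ex k n e j x) (ex k n e (j + 1) x)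
    refine mul_left_cancel₀ c.three_ne ?_
    rw [e2, e1, e3, e4] at h
    linear_combination h
  · intro t ht
    simp only [Finset.mem_singleton, Finset.mem_insert] at ht
    rw [mem_tri]
    rcases ht with rfl | rfl | rfl | rfl | rfl | rfl <;> dsimp <;> omega
  · rintro ⟨a, b, d⟩ ht h1 h2 h3
    rw [mem_tri] at ht
    simp only [Finset.mem_singleton, Finset.mem_insert, Prod.mk.injEq]
    dsimp at *; omega

lemma zar_eq {σ τ : Type*} {a b : (σ → k) → (τ → k)} (ha : PolyVec a) (hb : PolyVec b) :
    Zar {x | a x = b x} := by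
  have h := Zar.forall fun i => Zar.of_poly ((ha i).sub (hb i))
  convert h using 2 with x
  simp only [Set.mem_ofPred_eq, sub_eq_zero, funext_iff]

lemma zar_W (j : ℕ) : Zar (c.W e j) :=
  (Zar.forall fun m => Zar.of_poly (c.isPoly_G e m)).inter
    (Zar.forall fun _ => Zar.forall fun _ => zar_eq (.linear _) (.const 0))

lemma cone_W (j : ℕ) : IsCone (c.W e j) := by
  rintro x ⟨h1, h2⟩ s
  refine ⟨fun m => by rw [G_smul, h1, mul_zero], fun a ha => by rw [map_smul, h2 a ha, smul_zero]⟩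

lemma W_succ_of {j : ℕ} {x : Fin (e + 1) × Fin n → k} (hx : x ∈ c.W e j)
    (h : ex k n e j x = 0) : x ∈ c.W e (j + 1) := by
  refine ⟨hx.1, fun a ha => ?_⟩
  rcases Nat.lt_succ_iff_lt_or_eq.1 ha with h' | rfl
  · exact hx.2 a h'
  · exact h

lemma eq_zero_of_ex {x : Fin (e + 1) × Fin n → k} (h : ∀ a < e + 1, ex k n e a x = 0) :
    x = 0 := by
  funext ⟨⟨a, ha⟩, i⟩
  rw [← ex_of_lt e ha x i, h a ha]; rfl

/-- For `φ p = 1`, the tuples in `W j` whose leading coefficient is a multiple of `p`, subject to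
the next two coefficient equations divided by the power of the multiple `φ (x_j)`
that they contain. -/
def W' (j : ℕ) (φ : (Fin n → k) →ₗ[k] k) (p : Fin n → k) : Set (Fin (e + 1) × Fin n → k) :=
  {x | x ∈ c.W e j ∧ ex k n e j x = φ (ex k n e j x) • p ∧ c.T p p (ex k n e (j + 1) x) = 0 ∧
    φ (ex k n e j x) * c.T p p (ex k n e (j + 2) x) +
      c.T p (ex k n e (j + 1) x) (ex k n e (j + 1) x) = 0}

lemma isPoly_comp {σ : Type*} [Finite σ] (φ : (Fin n → k) →ₗ[k] k)
    (L : (σ → k) →ₗ[k] (Fin n → k)) : IsPoly fun x => φ (L x) := IsPoly.linear (φ.comp L)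

lemma zar_W' (j : ℕ) (φ : (Fin n → k) →ₗ[k] k) (p : Fin n → k) : Zar (c.W' (e := e) j φ p) := by
  refine (c.zar_W j).inter ((zar_eq (.linear _) (.smul (isPoly_comp _ _) (.const p))).inter
    ((Zar.of_poly (c.isPoly (.const p) (.const p) (.linear _))).inter (Zar.of_poly ?_)))
  exact ((isPoly_comp _ _).mul (c.isPoly (.const p) (.const p) (.linear _))).add
    (c.isPoly (.const p) (.linear _) (.linear _))

lemma cone_W' (j : ℕ) (φ : (Fin n → k) →ₗ[k] k) (p : Fin n → k) :
    IsCone (c.W' (e := e) j φ p) := by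
  rintro x ⟨h1, h2, h3, h4⟩ s
  refine ⟨c.cone_W j x h1 s, ?_, by rw [map_smul, map_smul, h3, smul_zero], ?_⟩
  · rw [map_smul, map_smul, smul_eq_mul, mul_smul, ← h2]
  · simp only [map_smul, LinearMap.smul_apply, smul_eq_mul]
    linear_combination s ^ 2 * h4

lemma mem_W' {j : ℕ} (hj : j ≤ e) {φ : (Fin n → k) →ₗ[k] k} {p : Fin n → k} (hp : φ p = 1)
    {x : Fin (e + 1) × Fin n → k} (hx : x ∈ c.W e j) {s : k} (hs : s ≠ 0)
    (hxp : ex k n e j x = s • p) : x ∈ c.W' (e := e) j φ p := by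
  have h1 := c.W_one hj hx
  have h2 := c.W_two hj hx
  have hφ : φ (ex k n e j x) = s := by rw [hxp, map_smul, hp, smul_eq_mul, mul_one]
  rw [hxp] at h1 h2
  simp only [map_smul, LinearMap.smul_apply, smul_eq_mul] at h1 h2
  refine ⟨hx, by rw [hφ, hxp], ?_, ?_⟩
  · exact (mul_eq_zero.1 ((mul_eq_zero.1 h1).resolve_left hs)).resolve_left hs
  · rw [hφ]
    exact mul_left_cancel₀ hs (by linear_combination h2)

end SmoothCubic

/-! ### The dimension of the cone of polynomial tuples on the cubic -/

namespace SmoothCubic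
variable {k : Type*} [Field k] {n : ℕ} (c : SmoothCubic k n) {e : ℕ}

lemma exists_dual {u : Fin n → k} (hu : u ≠ 0) : ∃ φ : (Fin n → k) →ₗ[k] k, φ u = 1 := by
  obtain ⟨i, hi⟩ := Function.ne_iff.1 hu
  exact ⟨(u i)⁻¹ • LinearMap.proj i, by simpa using inv_mul_cancel₀ hi⟩

lemma zar_ex {C : Set (Fin n → k)} (hC : Zar C) (j : ℕ) : Zar {x | ex k n e j x ∈ C} := by
  obtain ⟨S, hS⟩ := hC
  obtain ⟨ψ, hψ⟩ := exists_pull (PolyVec.linear (ex k n e j))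
  exact ⟨ψ '' S, fun x => by simp [hS, hψ]⟩

lemma cone_ex {C : Set (Fin n → k)} (hC : IsCone C) (j : ℕ) :
    IsCone {x | ex k n e j x ∈ C} := by
  intro x hx s
  change ex k n e j (s • x) ∈ C
  rw [map_smul]
  exact hC _ hx s

variable [IsAlgClosed k]

/-- A fibre dimension estimate at `x₀` for the projection `x ↦ x_j`: `s` hyperplanes through
`u` cut the image down to the line through `u`, over which `V(P)` lies in `W' j φ u`. -/
lemma fiber_aux {j : ℕ} (hj : j ≤ e) {D : ℕ} {u : Fin n → k} (hu : u ≠ 0)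
    {φ : (Fin n → k) →ₗ[k] k} (hφ : φ u = 1) (hD : Dim (c.W' (e := e) j φ u) D)
    {x₀ : Fin (e + 1) × Fin n → k} (hx₀ : ex k n e j x₀ = u) (s : ℕ) :
    ∀ (C : Set (Fin n → k)), Zar C → IsCone C → Dim C (s + 1) →
    ∀ P : Ideal (MvPolynomial (Fin (e + 1) × Fin n) k), P.IsPrime →
      VP P ⊆ c.W e j ∩ {x | ex k n e j x ∈ C} → x₀ ∈ VP P → Cle x₀ P (s + D) := by
  induction s with
  | zero =>
    intro C hC hCc hCd P hP hPC hx
    have hP' := coneIdeal_isPrime hP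
    have hsub := VP_coneIdeal_subset hP ((c.zar_W j).inter (zar_ex hC j))
      (fun x hx s => ⟨c.cone_W j x hx.1 s, cone_ex hCc j x hx.2 s⟩) hPC
    have hx' := subset_VP_coneIdeal hP hx
    obtain ⟨ψ, hψ⟩ := exists_pull (PolyVec.linear (ex k n e j))
    have hQ : ((coneIdeal P).comap ψ.toRingHom).IsPrime := Ideal.IsPrime.comap _
    have hQC : VP ((coneIdeal P).comap ψ.toRingHom) ⊆ C := by
      obtain ⟨S, hS⟩ := hC
      intro y hy
      rw [hS]
      intro f hf
      refine mem_VP.1 hy f (Ideal.mem_comap.2 (mem_of_forall_VP hP' fun x hx => ?_))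
      have := hψ x f
      exact this.trans ((hS _).1 (hsub hx).2 f hf)
    have hmem : ∀ x ∈ VP (coneIdeal P), ex k n e j x ∈ VP ((coneIdeal P).comap ψ.toRingHom) := by
      intro x hx
      rw [mem_VP]
      intro f hf
      rw [← hψ x f]
      exact mem_VP.1 hx _ (Ideal.mem_comap.1 hf)
    have hline := VP_subset_line hCd hQ hQC hu (fun s => by
      have := hmem _ (isCone_VP_coneIdeal hP _ hx' s)
      rwa [map_smul, hx₀] at this)
    have hcov : VP (coneIdeal P) ⊆ c.W' (e := e) j φ u ∪ c.W e (j + 1) := by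
      intro x hx
      obtain ⟨s, hs⟩ := hline (hmem x hx)
      by_cases hs0 : s = 0
      · exact Or.inr (c.W_succ_of (hsub hx).1 (by rw [hs, hs0, zero_smul]))
      · exact Or.inl (c.mem_W' hj hφ (hsub hx).1 hs0 hs)
    have hW' := (VP_subset_or hP' (c.zar_W' j φ u) (c.zar_W (j + 1)) hcov).resolve_right
      fun h => hu (by rw [← hx₀]; exact (h hx').2 j (by omega))
    rw [zero_add]
    exact (Dim.cle (c.zar_W' j φ u) (c.cone_W' j φ u) hD hP' hW' hx').mono (coneIdeal_le hP) le_rfl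
  | succ s ih =>
    intro C hC hCc hCd P hP hPC hx
    obtain ⟨l, hlu, hl⟩ := Dim.exists_form hC hCd u ((Dim.line u).mono le_rfl (by omega))
    obtain ⟨f, hf⟩ : IsPoly fun x => l (ex k n e j x) := isPoly_comp l _
    rw [show s + 1 + D = s + D + 1 by omega]
    refine Cle.of_cut f ((hf x₀).trans (by simp only [hx₀, hlu])) fun P' hP' hPP' hfP' hP'x => ?_
    refine ih (C ∩ {v | l v = 0}) (hC.inter (Zar.of_poly (.linear l))) ?_ hl P' hP' ?_ hP'x
    · rintro v ⟨hv, hv'⟩ s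
      have hv' : l v = 0 := hv'
      exact ⟨hCc v hv s, by change l (s • v) = 0; rw [map_smul, hv', smul_zero]⟩
    · intro x hx
      have h1 := hPC (hPP'.trans hx)
      refine ⟨h1.1, h1.2, ?_⟩
      have := mem_VP.1 hx f hfP'
      rwa [hf] at this

/-- The estimate of `fiber_aux`, transferred from `x₀` to the origin. -/
lemma fiber {j : ℕ} (hj : j ≤ e) {s D : ℕ} {C : Set (Fin n → k)} (hC : Zar C) (hCc : IsCone C)
    (hCd : Dim C (s + 1)) {P : Ideal (MvPolynomial (Fin (e + 1) × Fin n) k)} (hP : P.IsPrime)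
    (h0 : P ≤ ptIdeal 0) (hPC : VP P ⊆ c.W e j ∩ {x | ex k n e j x ∈ C})
    {x₀ : Fin (e + 1) × Fin n → k} (hx : x₀ ∈ VP P) (hx0 : ex k n e j x₀ ≠ 0)
    (hD : ∀ φ : (Fin n → k) →ₗ[k] k, φ (ex k n e j x₀) = 1 →
      Dim (c.W' (e := e) j φ (ex k n e j x₀)) D) : Cle 0 P (s + D) := by
  obtain ⟨φ, hφ⟩ := exists_dual hx0
  exact (c.fiber_aux hj hx0 hφ (hD φ hφ) rfl s C hC hCc hCd P hP hPC hx).transfer hP hx h0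

/-- The dimension of the tuples in `W j` whose leading coefficient lies in `C`, according to
whether that coefficient vanishes, is a degenerate point, or is a general point. -/
lemma dim_split {j : ℕ} (hj : j ≤ e) {s D B : ℕ} {C : Set (Fin n → k)} (hC : Zar C)
    (hCc : IsCone C) (hCd : Dim C (s + 1)) (hW : Dim (c.W e (j + 1)) B)
    (hD : ∀ p ∈ c.cubic, p ≠ 0 → p ∉ c.Eck → ∀ φ : (Fin n → k) →ₗ[k] k, φ p = 1 →
      Dim (c.W' (e := e) j φ p) D)
    (hD' : ∀ p ∈ c.cubic, p ≠ 0 → ∀ φ : (Fin n → k) →ₗ[k] k, φ p = 1 →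
      Dim (c.W' (e := e) j φ p) (D + 1))
    (h1 : D + 1 ≤ B) (h2 : s + D ≤ B) : Dim (c.W e j ∩ {x | ex k n e j x ∈ C}) B := by
  intro P hP h0 hPC
  by_cases ha : VP P ⊆ c.W e (j + 1)
  · exact hW P hP h0 ha
  by_cases hb : VP P ⊆ {x | ex k n e j x ∈ c.Eck}
  · obtain ⟨x₀, hx, hxW⟩ := Set.not_subset.1 ha
    have hx0 : ex k n e j x₀ ≠ 0 := fun h => hxW (c.W_succ_of (hPC hx).1 h)
    exact (c.fiber hj (s := 0) c.zar_Eck c.cone_Eck c.dim_Eck hP h0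
      (fun x hx => ⟨(hPC hx).1, hb hx⟩) hx hx0
      (hD' _ (c.W_zero hj (hPC hx).1) hx0)).mono le_rfl (by omega)
  · obtain ⟨x₀, hx, hxE⟩ := Set.not_subset.1 hb
    have hx0 : ex k n e j x₀ ≠ 0 := fun h => hxE (by
      change ex k n e j x₀ ∈ c.Eck
      rw [h]
      exact ⟨by simp, by simp⟩)
    exact (c.fiber hj hC hCc hCd hP h0 hPC hx hx0
      (hD _ (c.W_zero hj (hPC hx).1) hx0 hxE)).mono le_rfl h2

/-- On `W' j φ p`, the equation `φ (x_j) = 0` makes the next coefficient `x_{j+1}` lie on a line of the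
cubic through `p`: this is why the equations defining `W'` are kept. -/
lemma W'_cut {j : ℕ} {φ : (Fin n → k) →ₗ[k] k} {p : Fin n → k} (hj : j + 1 ≤ e) :
    c.W' (e := e) j φ p ∩ {x | φ (ex k n e j x) = 0} ⊆
      c.W e (j + 1) ∩ {x | ex k n e (j + 1) x ∈ c.Cp p} := by
  rintro x ⟨⟨h1, h2, h3, h4⟩, h5⟩
  have h5 : φ (ex k n e j x) = 0 := h5
  rw [h5, zero_smul] at h2
  rw [h5, zero_mul, zero_add] at h4
  have hW := c.W_succ_of h1 h2
  exact ⟨hW, h3, h4, c.W_zero hj hW⟩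

/-- The dimension bounds, by induction on the number `i = e + 1 - j` of free coefficients. -/
lemma dim_main (hn : 5 ≤ n) (i : ℕ) : ∀ j, j + i = e + 1 →
    Dim (c.W e j) (2 + i * (n - 3)) ∧ (1 ≤ i → ∀ p ∈ c.cubic, p ≠ 0 →
      ∀ φ : (Fin n → k) →ₗ[k] k, φ p = 1 →
      Dim (c.W' (e := e) j φ p) ((i - 1) * (n - 3) + 1 + 1) ∧
      (p ∉ c.Eck → Dim (c.W' (e := e) j φ p) ((i - 1) * (n - 3) + 1))) := by
  obtain ⟨r, rfl⟩ : ∃ r, n = r + 5 := ⟨n - 5, by omega⟩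
  simp only [show r + 5 - 3 = r + 2 by omega]
  induction i using Nat.strong_induction_on with
  | _ i ih =>
  intro j hji
  have hbase : Dim (c.W e (e + 1)) 0 := Dim.zero.mono
    (fun x hx => eq_zero_of_ex hx.2) le_rfl
  rcases i with _ | i
  · refine ⟨?_, by omega⟩
    rw [show j = e + 1 by omega]
    exact hbase.mono le_rfl (by omega)
  have hW1 := (ih i (by omega) (j + 1) (by omega)).1
  have hW' : ∀ p ∈ c.cubic, p ≠ 0 → ∀ φ : (Fin (r + 5) → k) →ₗ[k] k, φ p = 1 →
      Dim (c.W' (e := e) j φ p) (i * (r + 2) + 1 + 1) ∧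
      (p ∉ c.Eck → Dim (c.W' (e := e) j φ p) (i * (r + 2) + 1)) := by
    intro p hpc hp0 φ hφ
    rcases i with _ | i
    · have h1 : Dim (c.W' (e := e) j φ p) 1 := by
        refine Dim.of_cut (f := fun x => φ (ex k (r + 5) e j x)) (isPoly_comp _ _) (by simp) ?_
        refine hbase.mono ?_ le_rfl
        rintro x ⟨⟨h1, h2, -⟩, h5⟩
        have h5 : φ (ex k (r + 5) e j x) = 0 := h5
        rw [h5, zero_smul] at h2
        have := c.W_succ_of h1 h2
        rwa [show j + 1 = e + 1 by omega] at this
      exact ⟨h1.mono le_rfl (by omega), fun _ => h1.mono le_rfl (by omega)⟩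
    obtain ⟨-, hi⟩ := ih (i + 1) (by omega) (j + 1) (by omega)
    have hi := hi (by omega)
    simp only [Nat.add_sub_cancel] at hi
    have hW2 : Dim (c.W e (j + 2)) (2 + i * (r + 2)) :=
      (ih i (by omega) (j + 2) (by omega)).1
    have hmul : (i + 1) * (r + 2) = i * (r + 2) + r + 2 := by ring
    constructor
    · refine Dim.of_cut (f := fun x => φ (ex k (r + 5) e j x)) (isPoly_comp _ _) (by simp) ?_
      refine (c.dim_split (by omega) (s := r + 2) (D := i * (r + 2) + 1) (c.zar_Cp p) (c.cone_Cp p)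
        ((c.dim_Cp hn hp0).mono le_rfl (by omega)) (hW2.mono le_rfl (by omega))
        (fun p hp hp0 hpE φ hφ => (hi p hp hp0 φ hφ).2 hpE)
        (fun p hp hp0 φ hφ => (hi p hp hp0 φ hφ).1) (by omega) (by omega)).mono
        (c.W'_cut (by omega)) le_rfl
    · intro hpE
      refine Dim.of_cut (f := fun x => φ (ex k (r + 5) e j x)) (isPoly_comp _ _) (by simp) ?_
      refine (c.dim_split (by omega) (s := r + 1) (D := i * (r + 2) + 1) (c.zar_Cp p) (c.cone_Cp p)
        ((c.dim_Cp_of_not_mem hn hp0 hpc hpE).mono le_rfl (by omega)) (hW2.mono le_rfl (by omega))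
        (fun p hp hp0 hpE φ hφ => (hi p hp hp0 φ hφ).2 hpE)
        (fun p hp hp0 φ hφ => (hi p hp hp0 φ hφ).1) (by omega) (by omega)).mono
        (c.W'_cut (by omega)) le_rfl
  have hmul : (i + 1) * (r + 2) = i * (r + 2) + r + 2 := by ring
  refine ⟨?_, fun _ => by simpa only [Nat.add_sub_cancel] using hW'⟩
  refine (c.dim_split (j := j) (by omega) (s := r + 3) (D := i * (r + 2) + 1) c.zar_cubic
    c.cone_cubic ((c.dim_cubic hn).mono le_rfl (by omega)) (hW1.mono le_rfl (by omega))
    (fun p hp hp0 hpE φ hφ => (hW' p hp hp0 φ hφ).2 hpE)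
    (fun p hp hp0 φ hφ => (hW' p hp hp0 φ hφ).1) (by omega) (by omega)).mono
    (fun x hx => ⟨hx, c.W_zero (by omega) hx⟩) le_rfl

/-- Finitely many linear forms, as many as the dimension bound, cut a closed cone down to `0`. -/
lemma _root_.CubicCount.Dim.exists_forms {σ : Type*} [Finite σ] {d : ℕ} :
    ∀ {Z : Set (σ → k)}, Zar Z → IsCone Z → Dim Z d →
    ∃ l : Fin d → (σ → k) →ₗ[k] k, ∀ x ∈ Z, (∀ i, l i x = 0) → x = 0 := by
  induction d with
  | zero => exact fun hZ hc h => ⟨Fin.elim0, fun x hx _ => h.subset_zero hZ hc hx⟩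
  | succ d ih =>
    intro Z hZ hc h
    obtain ⟨l, -, hl⟩ := Dim.exists_form hZ h 0
      (Dim.zero.mono (by rintro x ⟨s, rfl⟩; simp) (by omega))
    obtain ⟨l', hl'⟩ := ih (hZ.inter (Zar.of_poly (.linear l)))
      (fun x hx s => ⟨hc x hx.1 s, by
        have : l x = 0 := hx.2
        change l (s • x) = 0
        rw [map_smul, this, smul_zero]⟩) hl
    refine ⟨Fin.cons l l', fun x hx hx' => hl' x ⟨hx, hx' 0⟩ fun i => ?_⟩
    simpa using hx' i.succ

/-- As many linear forms as the expected dimension `e (n - 3) + (n - 1)` cut the solutions of the cubic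
equation of degree at most `e` down to `0`. -/
lemma exists_forms (hn : 5 ≤ n) (e : ℕ) :
    ∃ l : Fin (e * (n - 3) + (n - 1)) → (Fin (e + 1) × Fin n → k) →ₗ[k] k,
      ∀ x, (∀ m, c.G e m x = 0) → (∀ i, l i x = 0) → x = 0 := by
  have h := (c.dim_main (e := e) hn (e + 1) 0 (by omega)).1.mono le_rfl
    (show 2 + (e + 1) * (n - 3) ≤ e * (n - 3) + (n - 1) by
      rw [add_mul, one_mul]; omega)
  obtain ⟨l, hl⟩ := Dim.exists_forms (c.zar_W 0) (c.cone_W 0) h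
  exact ⟨l, fun x hx => hl x ⟨hx, by simp⟩⟩

end SmoothCubic

/-! ### Finiteness over a system of polynomials with independent top forms -/

section Bezout
variable {k : Type*} [Field k] {σ τ : Type*} [Fintype σ] [Fintype τ]

lemma homogeneousComponent_mul_of_right {a b : MvPolynomial σ k} {d m : ℕ}
    (hb : b.IsHomogeneous d) : homogeneousComponent m (a * b) =
      (if d ≤ m then homogeneousComponent (m - d) a else 0) * b := by
  let _ : GradedAlgebra (homogeneousSubmodule σ k) := MvPolynomial.gradedAlgebra
  have h := DirectSum.coe_decompose_mul_of_right_mem (homogeneousSubmodule σ k) (a := a) m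
    ((mem_homogeneousSubmodule d b).2 hb)
  have h1 : ∀ (f : MvPolynomial σ k) (j : ℕ),
      (DirectSum.decompose (homogeneousSubmodule σ k) f j : MvPolynomial σ k) =
        homogeneousComponent j f := fun f j => decomposition.decompose'_apply f j
  rw [h1] at h
  rw [h]
  split_ifs with hd
  · rw [h1]
  · rw [zero_mul]

variable [IsAlgClosed k] {P G : τ → MvPolynomial σ k} {d : τ → ℕ}

/-- By the Nullstellensatz, all polynomials of large degree lie in the ideal of the top forms. -/
lemma exists_degree_bound (hG0 : ∀ x : σ → k, (∀ t, eval x (G t) = 0) → x = 0) :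
    ∃ R, ∀ m, R ≤ m → ∀ f : MvPolynomial σ k, f.IsHomogeneous m →
      f ∈ Ideal.span (Set.range G) := by
  classical
  have hX : ∀ i : σ, ∃ s, (X i : MvPolynomial σ k) ^ s ∈ Ideal.span (Set.range G) := by
    intro i
    have h := vanishingIdeal_zeroLocus_eq_radical (k := k) (K := k) (Ideal.span (Set.range G))
    change X i ∈ (Ideal.span (Set.range G)).radical
    rw [← h, mem_vanishingIdeal_iff]
    intro x hx
    have : x = 0 := hG0 x fun t => by
      have := hx (G t) (Ideal.subset_span ⟨t, rfl⟩)
      simpa [aeval_eq_eval] using this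
    simp [this]
  choose s hs using hX
  refine ⟨∑ i, s i + 1, fun m hm f hf => ?_⟩
  rw [f.as_sum]
  refine Ideal.sum_mem _ fun μ hμ => ?_
  have hdeg : μ.degree = m := by
    rw [Finsupp.degree_eq_weight_one]
    exact hf (mem_support_iff.1 hμ)
  obtain ⟨i, hi⟩ : ∃ i, s i ≤ μ i := by
    by_contra hcon
    push Not at hcon
    have : μ.degree ≤ ∑ i, s i := by
      rw [Finsupp.degree_eq_sum]
      exact Finset.sum_le_sum fun i _ => (hcon i).le
    omega
  have : monomial μ (coeff μ f) = monomial (μ - Finsupp.single i (s i)) (coeff μ f) * X i ^ s i := by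
    rw [X_pow_eq_monomial, monomial_mul, mul_one,
      tsub_add_cancel_of_le (Finsupp.single_le_iff.2 hi)]
  rw [this]
  exact Ideal.mul_mem_left _ _ (hs i)

/-- Division by the top forms and then replacing `G t` by `P t` lowers the degree. -/
lemma exists_rep (hG : ∀ t, (G t).IsHomogeneous (d t)) (hd : ∀ t, 0 < d t)
    (hPG : ∀ t, (P t - G t).totalDegree < d t)
    (hG0 : ∀ x : σ → k, (∀ t, eval x (G t) = 0) → x = 0) :
    ∃ R, ∀ m, R < m → ∀ f : MvPolynomial σ k, f.IsHomogeneous m →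
      ∃ (h : τ → MvPolynomial σ k) (r : MvPolynomial σ k), f = ∑ t, h t * P t + r ∧
        (∀ t, (h t).totalDegree < m) ∧ r.totalDegree < m := by
  classical
  obtain ⟨R, hR⟩ := exists_degree_bound hG0
  refine ⟨R, fun m hm f hf => ?_⟩
  obtain ⟨h, hh⟩ := Ideal.mem_span_range_iff_exists_fun.1 (hR m hm.le f hf)
  let h' : τ → MvPolynomial σ k := fun t =>
    if d t ≤ m then homogeneousComponent (m - d t) (h t) else 0
  have hf' : f = ∑ t, h' t * G t := by
    have := congrArg (homogeneousComponent m) hh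
    rw [homogeneousComponent_eq_self hf, map_sum] at this
    rw [← this]
    exact Finset.sum_congr rfl fun t _ => homogeneousComponent_mul_of_right (hG t)
  have hm0 : 0 < m := by omega
  have hdeg : ∀ t, h' t = 0 ∨ (d t ≤ m ∧ (h' t).totalDegree ≤ m - d t) := by
    intro t
    by_cases hdt : d t ≤ m
    · refine Or.inr ⟨hdt, ?_⟩
      simp only [h', if_pos hdt]
      exact (homogeneousComponent_isHomogeneous _ _).totalDegree_le
    · exact Or.inl (by simp [h', hdt])
  refine ⟨h', ∑ t, h' t * (G t - P t), ?_, fun t => ?_, ?_⟩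
  · rw [← Finset.sum_add_distrib, hf']
    exact Finset.sum_congr rfl fun t _ => by ring
  · rcases hdeg t with h0 | ⟨h1, h2⟩
    · rw [h0]; simpa using hm0
    · have := hd t
      omega
  · refine lt_of_le_of_lt (totalDegree_finsetSum _ _) ?_
    rw [Finset.sup_lt_iff (by simpa using hm0)]
    intro t _
    rcases hdeg t with h0 | ⟨h1, h2⟩
    · rw [h0]; simpa using hm0
    · refine lt_of_le_of_lt (totalDegree_mul _ _) ?_
      have h3 := hPG t
      rw [← totalDegree_neg, neg_sub] at h3
      omega

/-- If the top forms have no common zero except `0`, the polynomial ring is finite over the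
subring generated by the `P t`. -/
lemma finite_of_top (hG : ∀ t, (G t).IsHomogeneous (d t)) (hd : ∀ t, 0 < d t)
    (hPG : ∀ t, (P t - G t).totalDegree < d t)
    (hG0 : ∀ x : σ → k, (∀ t, eval x (G t) = 0) → x = 0) :
    (aeval (R := k) P).toRingHom.Finite := by
  classical
  obtain ⟨R, hR⟩ := exists_rep hG hd hPG hG0
  let alg : Algebra (MvPolynomial τ k) (MvPolynomial σ k) := (aeval (R := k) P).toRingHom.toAlgebra
  have htower : IsScalarTower k (MvPolynomial τ k) (MvPolynomial σ k) :=
    IsScalarTower.of_algebraMap_eq fun x => ((aeval (R := k) P).commutes x).symm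
  have hfg : (restrictTotalDegree (R := k) σ R).FG := Module.Finite.iff_fg.1 inferInstance
  obtain ⟨S, hS⟩ := hfg
  change Module.Finite _ _
  have key : ∀ m, ∀ f : MvPolynomial σ k, f.totalDegree < m →
      f ∈ Submodule.span (MvPolynomial τ k) (S : Set (MvPolynomial σ k)) := by
    intro m
    induction m with
    | zero => exact fun f hf => absurd hf (by omega)
    | succ m ih =>
      intro f hf
      by_cases hmR : m ≤ R
      · have : f ∈ Submodule.span k (S : Set (MvPolynomial σ k)) := by
          rw [hS, mem_restrictTotalDegree]; omega
        exact Submodule.span_le_restrictScalars k (MvPolynomial τ k) _ this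
      · rw [← sum_homogeneousComponent f]
        refine Submodule.sum_mem _ fun i hi => ?_
        have hi : i ≤ m := by rw [Finset.mem_range] at hi; omega
        have hhom := homogeneousComponent_isHomogeneous i f
        rcases hi.lt_or_eq with h | rfl
        · exact ih _ (hhom.totalDegree_le.trans_lt h)
        · obtain ⟨h, r, heq, h1, h2⟩ := hR i (by omega) _ hhom
          rw [heq]
          refine Submodule.add_mem _ (Submodule.sum_mem _ fun t _ => ?_) (ih r h2)
          have : h t * P t = (X t : MvPolynomial τ k) • h t := by
            rw [Algebra.smul_def]
            change _ = aeval P (X t) * h t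
            rw [aeval_X, mul_comm]
          rw [this]
          exact Submodule.smul_mem _ _ (ih _ (h1 t))
  exact ⟨⟨S, eq_top_iff.2 fun f _ => key _ f (Nat.lt_succ_self _)⟩⟩

/-- Comparing transcendence degrees, as many polynomials as variables over which the polynomial ring
is finite are algebraically independent. -/
lemma injective_of_finite (hcard : Fintype.card τ = Fintype.card σ)
    (h : (aeval (R := k) P).toRingHom.Finite) : Function.Injective (aeval (R := k) P) := by
  have hint : ∀ b, (aeval (R := k) P).toRingHom.IsIntegralElem b := h.to_isIntegral
  have halg : Algebra.IsAlgebraic (Algebra.adjoin k (Set.range P)) (MvPolynomial σ k) := by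
    have : Algebra.IsIntegral (Algebra.adjoin k (Set.range P)) (MvPolynomial σ k) := by
      refine ⟨fun b => ?_⟩
      obtain ⟨p, hp, hpb⟩ := hint b
      let φ : MvPolynomial τ k →ₐ[k] Algebra.adjoin k (Set.range P) :=
        (aeval fun t => ⟨P t, Algebra.subset_adjoin ⟨t, rfl⟩⟩)
      refine ⟨p.map φ.toRingHom, hp.map _, ?_⟩
      rw [Polynomial.eval₂_map]
      have : (algebraMap (Algebra.adjoin k (Set.range P)) (MvPolynomial σ k)).comp φ.toRingHom =
          (aeval (R := k) P).toRingHom := by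
        have : ((Algebra.adjoin k (Set.range P)).val.comp φ) = aeval (R := k) P := by
          ext t
          simp [φ]
        exact congrArg AlgHom.toRingHom this
      rw [this]
      exact hpb
    infer_instance
  have hb := Algebra.IsAlgebraic.isTranscendenceBasis_of_lift_le_trdeg_of_finite k P (by
    rw [MvPolynomial.trdeg_of_isDomain]
    simp [hcard])
  exact hb.1

end Bezout

/-! ### Growth of the number of monomials -/

section Count
variable {σ τ : Type*} [Fintype σ] [Fintype τ]

/-- The number of monomials of degree at most `m`. -/
noncomputable def cnt (σ : Type*) (m : ℕ) : ℕ := Nat.card {s : σ →₀ ℕ // s.degree ≤ m}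

lemma finite_cnt (m : ℕ) : Finite {s : σ →₀ ℕ // s.degree ≤ m} :=
  Finite.of_injective (β := σ → Fin (m + 1))
    (fun s i => ⟨s.1 i, Nat.lt_succ_of_le ((Finsupp.le_degree i s.1).trans s.2)⟩) (by
      intro s s' h
      ext i
      have := congrFun h i
      simpa using this)

lemma cnt_le (m : ℕ) : cnt σ m ≤ (m + 1) ^ Fintype.card σ := by
  have : Nat.card (σ → Fin (m + 1)) = (m + 1) ^ Fintype.card σ := by
    classical
    rw [Nat.card_eq_fintype_card]; simp
  rw [← this]
  refine Nat.card_le_card_of_injective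
    (fun s i => ⟨s.1 i, Nat.lt_succ_of_le ((Finsupp.le_degree i s.1).trans s.2)⟩) ?_
  intro s s' h
  ext i
  have := congrFun h i
  simpa using this

lemma cnt_pos (m : ℕ) : 0 < cnt σ m := by
  have := finite_cnt (σ := σ) m
  exact Nat.card_pos_iff.2 ⟨⟨⟨0, by simp⟩⟩, this⟩

lemma cnt_congr (h : Fintype.card τ = Fintype.card σ) (m : ℕ) : cnt τ m = cnt σ m := by
  let E := Finsupp.equivMapDomain (M := ℕ) (Fintype.equivOfCardEq h)
  refine Nat.card_congr ⟨fun s => ⟨Finsupp.equivMapDomain (Fintype.equivOfCardEq h) s.1, ?_⟩,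
    fun s => ⟨Finsupp.equivMapDomain (Fintype.equivOfCardEq h).symm s.1, ?_⟩, ?_, ?_⟩
  · rw [Finsupp.equivMapDomain_eq_mapDomain, Finsupp.degree_mapDomain]; exact s.2
  · rw [Finsupp.equivMapDomain_eq_mapDomain, Finsupp.degree_mapDomain]; exact s.2
  · intro s; ext i; simp
  · intro s; ext i; simp

/-- The number of monomials is of polynomial growth, so a shift of the degree cannot multiply it by
a factor bounded away from `1`. -/
lemma le_of_cnt {D D' r : ℕ} (hD : 0 < D) (h : ∀ m, D' * cnt σ m ≤ D * cnt σ (m + r)) :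
    D' ≤ D := by
  by_contra hcon
  push Not at hcon
  have hgrow : ∀ j, (1 + 1 / (D : ℝ)) ^ j ≤ cnt σ (j * r) := by
    intro j
    induction j with
    | zero => simpa using Nat.one_le_iff_ne_zero.2 (cnt_pos (σ := σ) 0).ne'
    | succ j ih =>
      have hDr : (0 : ℝ) < D := by exact_mod_cast hD
      have h1 : ((D : ℝ) + 1) * cnt σ (j * r) ≤ D * cnt σ (j * r + r) := by
        have h2 := h (j * r)
        have h3 : (D + 1) * cnt σ (j * r) ≤ D * cnt σ (j * r + r) :=
          (Nat.mul_le_mul_right _ hcon).trans h2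
        exact_mod_cast h3
      rw [pow_succ, add_mul, one_mul]
      calc (1 + 1 / (D : ℝ)) ^ j * (1 + 1 / (D : ℝ)) ≤ cnt σ (j * r) * (1 + 1 / (D : ℝ)) := by
            gcongr
        _ = (((D : ℝ) + 1) * cnt σ (j * r)) / D := by field_simp
        _ ≤ _ := by rw [div_le_iff₀ hDr]; linarith
  have hlim : Filter.Tendsto (fun j : ℕ => (j : ℝ) ^ Fintype.card σ / (1 + 1 / (D : ℝ)) ^ j)
      Filter.atTop (nhds 0) :=
    tendsto_pow_const_div_const_pow_of_one_lt _ (by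
      have : (0 : ℝ) < D := by exact_mod_cast hD
      simpa using this)
  have hpos : (0 : ℝ) < ((r : ℝ) + 1) ^ Fintype.card σ := by positivity
  have hev := hlim.eventually (gt_mem_nhds (inv_pos.2 hpos))
  obtain ⟨j, hj, hj1⟩ := (hev.and (Filter.eventually_ge_atTop 1)).exists
  have hDr : (0 : ℝ) < D := by exact_mod_cast hD
  have hp : (0 : ℝ) < (1 + 1 / (D : ℝ)) ^ j := by positivity
  have h1 : (cnt σ (j * r) : ℝ) ≤ ((r : ℝ) + 1) ^ Fintype.card σ * (j : ℝ) ^ Fintype.card σ := by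
    have h2 : cnt σ (j * r) ≤ ((r + 1) * j) ^ Fintype.card σ :=
      (cnt_le _).trans (Nat.pow_le_pow_left (by nlinarith) _)
    rw [← mul_pow]
    exact_mod_cast h2
  rw [div_lt_iff₀ hp, ← div_eq_inv_mul, lt_div_iff₀ hpos] at hj
  have := hgrow j
  linarith

/-- Rounding exponents down to multiples of the `d t`. -/
lemma cnt_le_weighted {d : τ → ℕ} (hd : ∀ t, 0 < d t) (m : ℕ) :
    Finite {a : τ →₀ ℕ // ∑ t, a t * d t ≤ m} ∧
    cnt τ m ≤ Nat.card {a : τ →₀ ℕ // ∑ t, a t * d t ≤ m} * ∏ t, d t := by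
  have hfin : Finite {a : τ →₀ ℕ // ∑ t, a t * d t ≤ m} := by
    have := finite_cnt (σ := τ) m
    refine Finite.of_injective (β := {s : τ →₀ ℕ // s.degree ≤ m}) (fun a => ⟨a.1, ?_⟩) ?_
    · rw [Finsupp.degree_eq_sum]
      exact (Finset.sum_le_sum fun t _ => Nat.le_mul_of_pos_right _ (hd t)).trans a.2
    · intro a b h
      exact Subtype.ext (Subtype.mk.inj h)
  refine ⟨hfin, ?_⟩
  have hc : Nat.card (∀ t, Fin (d t)) = ∏ t, d t := by
    classical
    rw [Nat.card_eq_fintype_card]; simp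
  rw [← hc, ← Nat.card_prod]
  refine Nat.card_le_card_of_injective (fun s => (⟨Finsupp.equivFunOnFinite.symm
    fun t => s.1 t / d t, ?_⟩, fun t => ⟨s.1 t % d t, Nat.mod_lt _ (hd t)⟩)) ?_
  · refine (Finset.sum_le_sum fun t _ => ?_).trans ((Finsupp.degree_eq_sum s.1).symm.le.trans s.2)
    simpa using Nat.div_mul_le_self _ _
  · intro s s' h
    ext t
    have h1 := congrArg (fun p => p.1.1 t) h
    have h2 := congrArg (fun p => (p.2 t).1) h
    simp only [Finsupp.equivFunOnFinite_symm_apply_apply] at h1 h2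
    rw [← Nat.div_add_mod (s.1 t) (d t), ← Nat.div_add_mod (s'.1 t) (d t), h1, h2]

end Count

/-! ### A weak form of Bézout's theorem -/

section Bezout
variable {k : Type*} [Field k] {σ τ : Type*} [Fintype σ] [Fintype τ]

lemma finrank_restrictTotalDegree (m : ℕ) :
    Module.finrank k (restrictTotalDegree (R := k) σ m) = cnt σ m :=
  Module.finrank_eq_nat_card_basis (basisRestrictSupport k {n : σ →₀ ℕ | (n.sum fun _ e => e) ≤ m})

lemma totalDegree_aeval_monomial_le {P : τ → MvPolynomial σ k} {d : τ → ℕ}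
    (h : ∀ t, (P t).totalDegree ≤ d t) (a : τ →₀ ℕ) :
    (aeval P (monomial a (1 : k))).totalDegree ≤ ∑ t, a t * d t := by
  rw [aeval_monomial, map_one, one_mul, Finsupp.prod_fintype _ _ (fun _ => pow_zero _)]
  refine (totalDegree_finsetProd _ _).trans (Finset.sum_le_sum fun t _ => ?_)
  exact (totalDegree_pow _ _).trans (Nat.mul_le_mul_left _ (h t))

variable [IsAlgClosed k] {P G : τ → MvPolynomial σ k} {d : τ → ℕ}

/-- A weak form of Bézout's theorem: as many equations as unknowns, whose top forms have no
common zero except `0`, have at most the product of the degrees many common zeros. -/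
theorem card_le_prod (hcard : Fintype.card τ = Fintype.card σ)
    (hG : ∀ t, (G t).IsHomogeneous (d t)) (hd : ∀ t, 0 < d t)
    (hPG : ∀ t, (P t - G t).totalDegree < d t)
    (hG0 : ∀ x : σ → k, (∀ t, eval x (G t) = 0) → x = 0)
    (Z : Finset (σ → k)) (hZ : ∀ z ∈ Z, ∀ t, eval z (P t) = 0) : Z.card ≤ ∏ t, d t := by
  classical
  have hfin := finite_of_top hG hd hPG hG0
  have hinj := injective_of_finite hcard hfin
  let alg : Algebra (MvPolynomial τ k) (MvPolynomial σ k) := (aeval (R := k) P).toRingHom.toAlgebra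
  have halg : ∀ a, algebraMap (MvPolynomial τ k) (MvPolynomial σ k) a = aeval P a := fun _ => rfl
  have htower : IsScalarTower k (MvPolynomial τ k) (MvPolynomial σ k) :=
    IsScalarTower.of_algebraMap_eq fun x => ((aeval (R := k) P).commutes x).symm
  have hfaith : FaithfulSMul (MvPolynomial τ k) (MvPolynomial σ k) :=
    (faithfulSMul_iff_algebraMap_injective _ _).2 hinj
  have htf : Module.IsTorsionFree (MvPolynomial τ k) (MvPolynomial σ k) := inferInstance
  have hinf : Infinite k := IsAlgClosed.instInfinite
  -- a linear form taking distinct values on `Z`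
  obtain ⟨l, hl⟩ := Module.exists_dual_forall_apply_ne_zero (K := k)
    (fun p : {p : Z × Z // p.1 ≠ p.2} => (p.1.1.1 - p.1.2.1 : σ → k))
    (fun p h => p.2 (Subtype.ext (sub_eq_zero.1 h)))
  obtain ⟨u, hu⟩ := IsPoly.linear l
  have hint : IsIntegral (MvPolynomial τ k) u := hfin.to_isIntegral u
  set μ := minpoly (MvPolynomial τ k) u with hμ
  have hmonic : μ.Monic := minpoly.monic hint
  -- the values of `u` on `Z` are roots of the minimal polynomial specialized at `P = 0`
  have hZD : Z.card ≤ μ.natDegree := by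
    have hroot : ∀ z ∈ Z, (μ.map (eval (0 : τ → k))).eval (l z) = 0 := by
      intro z hz
      have h1 : (eval z).comp (algebraMap (MvPolynomial τ k) (MvPolynomial σ k)) =
          eval (0 : τ → k) := by
        refine MvPolynomial.ringHom_ext (fun r => ?_) fun t => ?_
        · simp [halg]
        · simp [halg, hZ z hz t]
      have h2 := congrArg (eval z) (minpoly.aeval (MvPolynomial τ k) u)
      rw [Polynomial.aeval_def, Polynomial.hom_eval₂, h1, hu, map_zero] at h2
      rw [Polynomial.eval_map]
      exact h2
    have hne := (hmonic.map (eval (0 : τ → k))).ne_zero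
    calc Z.card = (Z.image l).card := by
          rw [Finset.card_image_of_injOn]
          intro z hz z' hz' h
          by_contra hne
          refine hl ⟨(⟨z, hz⟩, ⟨z', hz'⟩), fun h => hne (congrArg Subtype.val h)⟩ ?_
          simp only [map_sub]
          exact sub_eq_zero.2 h
      _ ≤ (μ.map (eval (0 : τ → k))).roots.toFinset.card := by
          refine Finset.card_le_card fun y hy => ?_
          obtain ⟨z, hz, rfl⟩ := Finset.mem_image.1 hy
          rw [Multiset.mem_toFinset, Polynomial.mem_roots hne]
          exact hroot z hz
      _ ≤ (μ.map (eval (0 : τ → k))).roots.card := Multiset.toFinset_card_le _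
      _ ≤ (μ.map (eval (0 : τ → k))).natDegree := Polynomial.card_roots' _
      _ ≤ μ.natDegree := Polynomial.natDegree_map_le
  refine hZD.trans (le_of_cnt (σ := σ) (r := μ.natDegree * u.totalDegree)
    (Finset.prod_pos fun t _ => hd t) fun m => ?_)
  obtain ⟨hfinA, hA⟩ := cnt_le_weighted hd m
  rw [cnt_congr hcard] at hA
  -- the elements `P ^ a * u ^ j` are linearly independent
  have hpow : LinearIndependent (MvPolynomial τ k) fun j : Fin μ.natDegree => u ^ (j : ℕ) := by
    rw [Fintype.linearIndependent_iff]
    intro g hg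
    let p : Polynomial (MvPolynomial τ k) :=
      ∑ j : Fin μ.natDegree, Polynomial.C (g j) * Polynomial.X ^ (j : ℕ)
    have hp0 : p = 0 := by
      by_contra hp0
      have h1 := minpoly.IsIntegrallyClosed.degree_le_of_ne_zero (s := u) hp0 (by
        simpa [p, Algebra.smul_def] using hg)
      refine absurd h1 (not_le_of_gt ?_)
      rw [← hμ, Polynomial.degree_eq_natDegree hmonic.ne_zero]
      refine (Polynomial.degree_sum_le _ _).trans_lt ?_
      rw [Finset.sup_lt_iff (WithBot.bot_lt_coe _)]
      intro j _
      exact (Polynomial.degree_C_mul_X_pow_le _ _).trans_lt (by exact_mod_cast j.2)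
    intro j
    have h2 := congrArg (fun p => Polynomial.coeff p j) hp0
    simpa [p, Polynomial.finsetSum_coeff, Polynomial.coeff_C_mul, Polynomial.coeff_X_pow,
      Fin.val_inj] using h2
  have hli := linearIndependent_smul (basisMonomials τ k).linearIndependent hpow
  have hPd : ∀ t, (P t).totalDegree ≤ d t := by
    intro t
    have : P t = G t + (P t - G t) := by ring
    rw [this]
    exact (totalDegree_add _ _).trans (max_le (hG t).totalDegree_le (hPG t).le)
  let fam : {a : τ →₀ ℕ // ∑ t, a t * d t ≤ m} × Fin μ.natDegree →
      restrictTotalDegree (R := k) σ (m + μ.natDegree * u.totalDegree) := fun p =>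
    ⟨basisMonomials τ k p.1.1 • u ^ (p.2 : ℕ), by
      rw [mem_restrictTotalDegree, Algebra.smul_def, halg]
      refine (totalDegree_mul _ _).trans (add_le_add ?_ ?_)
      · exact (totalDegree_aeval_monomial_le hPd _).trans p.1.2
      · exact (totalDegree_pow _ _).trans (Nat.mul_le_mul_right _ p.2.2.le)⟩
  have hfam : LinearIndependent k fam := by
    refine LinearIndependent.of_comp (Submodule.subtype _) ?_
    exact hli.comp (fun p : {a : τ →₀ ℕ // ∑ t, a t * d t ≤ m} × Fin μ.natDegree => (p.1.1, p.2))
      (fun p q h => Prod.ext (Subtype.ext (Prod.mk.inj h).1) (Prod.mk.inj h).2)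
  cases nonempty_fintype {a : τ →₀ ℕ // ∑ t, a t * d t ≤ m}
  have h1 := hfam.fintype_card_le_finrank
  rw [finrank_restrictTotalDegree, Fintype.card_prod, Fintype.card_fin,
    ← Nat.card_eq_fintype_card] at h1
  calc μ.natDegree * cnt σ m ≤ μ.natDegree *
        (Nat.card {a : τ →₀ ℕ // ∑ t, a t * d t ≤ m} * ∏ t, d t) := Nat.mul_le_mul_left _ hA
    _ = (∏ t, d t) * (Nat.card {a : τ →₀ ℕ // ∑ t, a t * d t ≤ m} * μ.natDegree) := by ring
    _ ≤ _ := Nat.mul_le_mul_left _ h1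

end Bezout

/-! ### The polarization of a cubic form -/

section Form
variable {k : Type*} [Field k] {n : ℕ}

lemma pderiv_comm (F : MvPolynomial (Fin n) k) (i j : Fin n) :
    pderiv i (pderiv j F) = pderiv j (pderiv i F) := by
  have h : ⁅pderiv (R := k) i, pderiv (R := k) j⁆ = 0 := by
    refine MvPolynomial.derivation_ext fun l => ?_
    rw [Derivation.commutator_apply, pderiv_X, pderiv_X]
    simp [Pi.single_apply, apply_ite]
  have := DFunLike.congr_fun h F
  rw [Derivation.commutator_apply] at this
  exact sub_eq_zero.1 this

lemma euler {F : MvPolynomial (Fin n) k} {d : ℕ} (hF : F.IsHomogeneous d) (v : Fin n → k) :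
    ∑ i, v i * eval v (pderiv i F) = d * eval v F := by
  have := congrArg (eval v) hF.sum_X_mul_pderiv
  simpa using this

/-- The trilinear form with the third partial derivatives of a cubic form as coefficients. -/
noncomputable def polar (F : MvPolynomial (Fin n) k) :
    (Fin n → k) →ₗ[k] (Fin n → k) →ₗ[k] (Fin n → k) →ₗ[k] k :=
  ∑ i, (LinearMap.proj i).smulRight (∑ j, (LinearMap.proj j).smulRight
    (∑ l, eval 0 (pderiv i (pderiv j (pderiv l F))) • LinearMap.proj (R := k) (φ := fun _ => k) l))

lemma polar_apply (F : MvPolynomial (Fin n) k) (u v w : Fin n → k) :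
    polar F u v w =
      ∑ i, ∑ j, ∑ l, u i * v j * w l * eval 0 (pderiv i (pderiv j (pderiv l F))) := by
  simp only [polar, LinearMap.sum_apply, LinearMap.smulRight_apply, LinearMap.smul_apply,
    LinearMap.proj_apply, smul_eq_mul, Finset.mul_sum]
  refine Finset.sum_congr rfl fun i _ => Finset.sum_congr rfl fun j _ =>
    Finset.sum_congr rfl fun l _ => by ring

variable {F : MvPolynomial (Fin n) k}

/-- Euler's identity, applied to the first and second derivatives. -/
lemma polar_self (hF : F.IsHomogeneous 3) (v w : Fin n → k) :
    polar F v v w = 2 * ∑ l, w l * eval v (pderiv l F) := by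
  have h2 : ∀ l, (pderiv l F).IsHomogeneous 2 := fun l => hF.pderiv
  have h1 : ∀ j l, (pderiv j (pderiv l F)).IsHomogeneous 1 := fun j l => (h2 l).pderiv
  have h0 : ∀ i j l, eval 0 (pderiv i (pderiv j (pderiv l F))) =
      eval v (pderiv i (pderiv j (pderiv l F))) := by
    intro i j l
    have h : (pderiv i (pderiv j (pderiv l F))).IsHomogeneous 0 := (h1 j l).pderiv
    rw [totalDegree_eq_zero_iff_eq_C.1 ((totalDegree_zero_iff_isHomogeneous _).2 h), eval_C, eval_C]
  rw [polar_apply]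
  calc _ = ∑ l, w l * ∑ j, v j * ∑ i, v i * eval v (pderiv i (pderiv j (pderiv l F))) := by
        rw [Finset.sum_comm]
        simp only [Finset.mul_sum]
        rw [Finset.sum_congr rfl fun j _ => Finset.sum_comm, Finset.sum_comm]
        refine Finset.sum_congr rfl fun l _ => Finset.sum_congr rfl fun j _ =>
          Finset.sum_congr rfl fun i _ => ?_
        rw [h0]; ring
    _ = _ := by
        rw [Finset.mul_sum]
        refine Finset.sum_congr rfl fun l _ => ?_
        rw [Finset.sum_congr rfl fun j _ => by rw [euler (h1 j l)]]
        simp only [Nat.cast_one, one_mul]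
        rw [euler (h2 l)]
        push_cast; ring

lemma polar_diag (hF : F.IsHomogeneous 3) (v : Fin n → k) :
    polar F v v v = 6 * eval v F := by
  rw [polar_self hF, euler hF]; push_cast; ring

/-- The polarization of a smooth cubic form. -/
noncomputable def ofForm (hF : F.IsHomogeneous 3) (h2 : (2 : k) ≠ 0) (h3 : (3 : k) ≠ 0)
    (hs : ∀ v : Fin n → k, v ≠ 0 → eval v F = 0 → ∃ i, eval v (pderiv i F) ≠ 0) :
    SmoothCubic k n where
  T := polar F
  swap12 u v w := by
    rw [polar_apply, polar_apply, Finset.sum_comm]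
    refine Finset.sum_congr rfl fun j _ => Finset.sum_congr rfl fun i _ =>
      Finset.sum_congr rfl fun l _ => ?_
    rw [pderiv_comm _ i j]; ring
  swap23 u v w := by
    rw [polar_apply, polar_apply]
    refine Finset.sum_congr rfl fun i _ => ?_
    rw [Finset.sum_comm]
    refine Finset.sum_congr rfl fun j _ => Finset.sum_congr rfl fun l _ => ?_
    rw [pderiv_comm _ l j]; ring
  smooth v hv := by
    by_contra! h
    have h6 : (6 : k) ≠ 0 := by
      rw [show (6 : k) = 2 * 3 by norm_num]; exact mul_ne_zero h2 h3
    have h0 := h v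
    rw [polar_diag hF] at h0
    obtain ⟨i, hi⟩ := hs v hv ((mul_eq_zero.1 h0).resolve_left h6)
    have h1 := h (Pi.single i 1)
    rw [polar_self hF] at h1
    refine hi ?_
    simpa [Pi.single_apply] using (mul_eq_zero.1 h1).resolve_left h2
  two_ne := h2
  three_ne := h3

end Form

namespace SmoothCubic
variable {k : Type*} [Field k] {n : ℕ} (c : SmoothCubic k n)

lemma exists_linear_rep {σ : Type*} [Fintype σ] (l : (σ → k) →ₗ[k] k) :
    ∃ b : σ → k, ∀ x, l x = ∑ i, b i * x i := by
  classical
  refine ⟨fun i => l (Pi.single i 1), fun x => ?_⟩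
  conv_lhs => rw [pi_eq_sum_univ' x]
  rw [map_sum]
  refine Finset.sum_congr rfl fun i _ => ?_
  rw [map_smul, smul_eq_mul, mul_comm]

lemma T_sum {ι : Type*} (s : Finset ι) (f g h : ι → Fin n → k) :
    c.T (∑ i ∈ s, f i) (∑ i ∈ s, g i) (∑ i ∈ s, h i) =
      ∑ i ∈ s, ∑ j ∈ s, ∑ l ∈ s, c.T (f i) (g j) (h l) := by
  rw [map_sum c.T, LinearMap.sum_apply, LinearMap.sum_apply]
  refine Finset.sum_congr rfl fun i _ => ?_
  rw [map_sum (c.T (f i)), LinearMap.sum_apply]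
  exact Finset.sum_congr rfl fun j _ => map_sum _ _ _

lemma exists_homogeneous_T {σ : Type*} [Fintype σ] (A B D : (σ → k) →ₗ[k] (Fin n → k)) :
    ∃ p : MvPolynomial σ k, p.IsHomogeneous 3 ∧ ∀ x, eval x p = c.T (A x) (B x) (D x) := by
  classical
  have hlin : ∀ l : (σ → k) →ₗ[k] k, ∃ p : MvPolynomial σ k, p.IsHomogeneous 1 ∧
      ∀ x, eval x p = l x := by
    intro l
    obtain ⟨b, hb⟩ := exists_linear_rep l
    exact ⟨∑ i, C (b i) * X i, .sum _ _ _ fun i _ => isHomogeneous_C_mul_X _ _,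
      fun x => by rw [hb]; simp⟩
  choose a ha ha' using fun i => hlin ((LinearMap.proj i).comp A)
  choose b hb hb' using fun i => hlin ((LinearMap.proj i).comp B)
  choose d hd hd' using fun i => hlin ((LinearMap.proj i).comp D)
  refine ⟨∑ i, ∑ j, ∑ l, C (c.T (Pi.single i 1) (Pi.single j 1) (Pi.single l 1)) *
    (a i * b j * d l), .sum _ _ _ fun i _ => .sum _ _ _ fun j _ => .sum _ _ _ fun l _ =>
      .C_mul (((ha i).mul (hb j)).mul (hd l)) _, fun x => ?_⟩
  have h : ∀ u v w, c.T u v w = ∑ i, ∑ j, ∑ l,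
      c.T (Pi.single i 1) (Pi.single j 1) (Pi.single l 1) * (u i * v j * w l) := by
    intro u v w
    conv_lhs => rw [pi_eq_sum_univ' u, pi_eq_sum_univ' v, pi_eq_sum_univ' w]
    rw [T_sum]
    refine Finset.sum_congr rfl fun i _ => Finset.sum_congr rfl fun j _ =>
      Finset.sum_congr rfl fun l _ => ?_
    simp only [map_smul, LinearMap.smul_apply, smul_eq_mul]
    ring
  rw [h]
  simp only [map_sum, map_mul, eval_C, ha', hb', hd', LinearMap.comp_apply, LinearMap.proj_apply]

lemma exists_homogeneous_G (e m : ℕ) : ∃ p : MvPolynomial (Fin (e + 1) × Fin n) k,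
    p.IsHomogeneous 3 ∧ ∀ x, eval x p = c.G e m x := by
  choose p hp hp' using fun t : ℕ × ℕ × ℕ =>
    c.exists_homogeneous_T (ex k n e t.1) (ex k n e t.2.1) (ex k n e t.2.2)
  exact ⟨∑ t ∈ tri e m, p t, .sum _ _ _ fun t _ => hp t, fun x => by
    rw [map_sum]; exact Finset.sum_congr rfl fun t _ => hp' t x⟩

lemma G_of_gt {e m : ℕ} (h : 3 * e < m) (x : Fin (e + 1) × Fin n → k) : c.G e m x = 0 := by
  refine Finset.sum_eq_zero fun t ht => ?_
  obtain ⟨_, ht⟩ := (mem_tri e).1 ht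
  by_cases h1 : e < t.1
  · rw [ex_of_gt e h1, map_zero, LinearMap.zero_apply, LinearMap.zero_apply]
  by_cases h2 : e < t.2.1
  · rw [ex_of_gt e h2, map_zero, LinearMap.zero_apply]
  rw [ex_of_gt e (by omega : e < t.2.2), map_zero]

/-- The generating function of the `G m`. -/
lemma sum_G (e : ℕ) (x : Fin (e + 1) × Fin n → k) (s : k) :
    c.T (∑ a : Fin (e + 1), s ^ (a : ℕ) • fun i => x (a, i))
      (∑ a : Fin (e + 1), s ^ (a : ℕ) • fun i => x (a, i))
      (∑ a : Fin (e + 1), s ^ (a : ℕ) • fun i => x (a, i)) =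
      ∑ m ∈ Finset.range (3 * e + 7), s ^ m * c.G e m x := by
  have h : ∑ a : Fin (e + 1), s ^ (a : ℕ) • (fun i => x (a, i)) =
      ∑ a ∈ Finset.range (e + 3), s ^ a • ex k n e a x := by
    rw [Finset.sum_range_succ, Finset.sum_range_succ, ex_of_gt e (by omega),
      ex_of_gt e (by omega), smul_zero, smul_zero, add_zero, add_zero, Finset.sum_range]
    refine Finset.sum_congr rfl fun a _ => ?_
    congr 1
    funext i
    rw [ex_of_lt e a.2]
  rw [h]
  have h2 : ∀ m, s ^ m * c.G e m x = ∑ t ∈ Finset.range (e + 3) ×ˢ Finset.range (e + 3) ×ˢ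
      Finset.range (e + 3) with t.1 + t.2.1 + t.2.2 = m, s ^ (t.1 + t.2.1 + t.2.2) *
        c.T (ex k n e t.1 x) (ex k n e t.2.1 x) (ex k n e t.2.2 x) := by
    intro m
    rw [G, Finset.mul_sum]
    refine Finset.sum_congr rfl fun t ht => ?_
    rw [((mem_tri e).1 ht).2]
  simp only [h2]
  rw [Finset.sum_fiberwise_of_maps_to]
  · rw [T_sum]
    simp only [Finset.sum_product]
    refine Finset.sum_congr rfl fun i _ => Finset.sum_congr rfl fun j _ =>
      Finset.sum_congr rfl fun l _ => ?_
    simp only [map_smul, LinearMap.smul_apply, smul_eq_mul]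
    ring
  · rintro t ht
    simp only [Finset.mem_product, Finset.mem_range] at ht ⊢
    omega

end SmoothCubic

/-! ### Counting points over the finite field -/

lemma add_pow_card {Fq k : Type*} [Field Fq] [Fintype Fq] [Field k] [Algebra Fq k] {ι : Type*}
    (s : Finset ι) (f : ι → k) :
    (∑ i ∈ s, f i) ^ Fintype.card Fq = ∑ i ∈ s, f i ^ Fintype.card Fq := by
  obtain ⟨m, hp, hm⟩ := FiniteField.card Fq (ringChar Fq)
  have : Fact (ringChar Fq).Prime := ⟨hp⟩
  have : CharP k (ringChar Fq) := charP_of_injective_algebraMap (algebraMap Fq k).injective _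
  have : ExpChar k (ringChar Fq) := .prime hp
  rw [hm, sum_pow_char_pow]

/-- A bound for the number of solutions of the cubic equation by tuples of polynomials with
coefficients in a finite field: besides the `3 e + 1` cubic equations `G m`, the coefficients
satisfy the equations `l ^ q = l` for linear forms `l` as in `SmoothCubic.exists_forms`. -/
lemma SmoothCubic.card_le {Fq k : Type*} [Field Fq] [Fintype Fq] [Field k] [Algebra Fq k]
    [IsAlgClosed k] {n : ℕ} (c : SmoothCubic k n) (hn : 5 ≤ n) (e : ℕ)
    (Z : Finset (Fin (e + 1) × Fin n → k)) (hZ : ∀ z ∈ Z, ∀ m, c.G e m z = 0)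
    (hq : ∀ z ∈ Z, ∀ i, z i ^ Fintype.card Fq = z i) :
    Z.card ≤ 3 ^ (3 * e + 1) * Fintype.card Fq ^ (e * (n - 3) + (n - 1)) := by
  set q := Fintype.card Fq with hqdef
  have hq1 : 1 < q := Fintype.one_lt_card
  obtain ⟨l, hl⟩ := c.exists_forms hn e
  choose b hb using fun j => exists_linear_rep (l j)
  choose g hg hg' using c.exists_homogeneous_G e
  have hpow : ∀ j x, eval x (∑ i, C (b j i ^ q) * X i ^ q) = l j x ^ q := by
    intro j x
    rw [hb, add_pow_card (Fq := Fq)]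
    simp [mul_pow, hqdef]
  have h := card_le_prod (k := k) (σ := Fin (e + 1) × Fin n)
    (τ := Fin (3 * e + 1) ⊕ Fin (e * (n - 3) + (n - 1)))
    (P := Sum.elim (fun m => g m)
      (fun j => ∑ i, C (b j i ^ q) * X i ^ q - ∑ i, C (b j i ^ q) * X i))
    (G := Sum.elim (fun m => g m) (fun j => ∑ i, C (b j i ^ q) * X i ^ q))
    (d := Sum.elim (fun _ => 3) (fun _ => q)) ?_ ?_ ?_ ?_ ?_ Z ?_
  · simpa [Fintype.prod_sum_type] using h
  · obtain ⟨m, rfl⟩ := Nat.exists_eq_add_of_le hn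
    simp only [Fintype.card_sum, Fintype.card_prod, Fintype.card_fin]
    rw [show 5 + m - 3 = m + 2 by omega, show 5 + m - 1 = m + 4 by omega]
    ring
  · rintro (m | j)
    · exact hg m
    · exact .sum _ _ _ fun i _ => isHomogeneous_C_mul_X_pow _ _ _
  · rintro (m | j)
    · exact Nat.succ_pos _
    · exact Nat.zero_lt_of_lt hq1
  · rintro (m | j)
    · simp
    · simp only [Sum.elim_inr, sub_sub_cancel_left, totalDegree_neg]
      refine lt_of_le_of_lt (IsHomogeneous.totalDegree_le (n := 1) ?_) hq1
      exact .sum _ _ _ fun i _ => isHomogeneous_C_mul_X _ _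
  · intro x hx
    refine hl x (fun m => ?_) fun j => ?_
    · by_cases hm : m < 3 * e + 1
      · rw [← hg']; exact hx (.inl ⟨m, hm⟩)
      · exact c.G_of_gt (by omega) x
    · have := hx (.inr j)
      rw [Sum.elim_inr, hpow] at this
      exact pow_eq_zero_iff (by omega) |>.1 this
  · rintro z hz (m | j)
    · exact (hg' m z).trans (hZ z hz m)
    · simp [hq z hz]

section Count
variable {Fq : Type*} [Field Fq] {n : ℕ}

/-- The coefficients of a tuple of polynomials, in a field extension. -/
noncomputable def tupleCoeffs (k : Type*) [Field k] [Algebra Fq k] (e : ℕ) (x : Fin n → Polynomial Fq) :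
    Fin (e + 1) × Fin n → k := fun p => algebraMap Fq k ((x p.2).coeff p.1)

lemma tupleCoeffs_injOn (k : Type*) [Field k] [Algebra Fq k] (e : ℕ) :
    Set.InjOn (tupleCoeffs k e) {x : Fin n → Polynomial Fq | ∀ i, (x i).degree ≤ (e : ℕ)} := by
  intro x hx y hy h
  funext i
  ext a
  by_cases ha : a < e + 1
  · exact (algebraMap Fq k).injective (congrFun h (⟨a, ha⟩, i))
  · have : (e : WithBot ℕ) < a := by exact_mod_cast (by omega : e < a)
    rw [Polynomial.coeff_eq_zero_of_degree_lt ((hx i).trans_lt this),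
      Polynomial.coeff_eq_zero_of_degree_lt ((hy i).trans_lt this)]

lemma sum_tupleCoeffs (k : Type*) [Field k] [Algebra Fq k] (e : ℕ) {x : Fin n → Polynomial Fq}
    (hx : ∀ i, (x i).degree ≤ (e : ℕ)) (s : k) :
    (∑ a : Fin (e + 1), s ^ (a : ℕ) • fun i => tupleCoeffs k e x (a, i)) =
      fun i => Polynomial.aeval s (x i) := by
  funext i
  have : (x i).natDegree < e + 1 :=
    Nat.lt_succ_of_le (Polynomial.natDegree_le_of_degree_le (hx i))
  rw [Polynomial.aeval_eq_sum_range' this, Finset.sum_range, Finset.sum_apply]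
  refine Finset.sum_congr rfl fun a _ => ?_
  simp [tupleCoeffs, Algebra.smul_def, mul_comm]

/-- The coefficients of a solution over `Fq[t]` solve the equations `G m`. -/
lemma G_tupleCoeffs {k : Type*} [Field k] [Infinite k] [Algebra Fq k] (c : SmoothCubic k n)
    (F : MvPolynomial (Fin n) Fq) (hc : ∀ v, c.T v v v = 6 * eval v (map (algebraMap Fq k) F))
    {e : ℕ} {x : Fin n → Polynomial Fq} (hx : ∀ i, (x i).degree ≤ (e : ℕ))
    (hxF : aeval x F = 0) (m : ℕ) : c.G e m (tupleCoeffs k e x) = 0 := by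
  by_cases hm : m < 3 * e + 7
  swap
  · exact c.G_of_gt (by omega) _
  let p : Polynomial k := ∑ m ∈ Finset.range (3 * e + 7),
    Polynomial.C (c.G e m (tupleCoeffs k e x)) * Polynomial.X ^ m
  have hp : p = 0 := by
    refine Polynomial.funext fun s => ?_
    have h1 := c.sum_G e (tupleCoeffs k e x) s
    rw [sum_tupleCoeffs k e hx, hc, eval_map, ← aeval_def] at h1
    have h2 : aeval (fun i => Polynomial.aeval s (x i)) F = Polynomial.aeval s (aeval x F) := by
      rw [← comp_aeval_apply]
    rw [h2, hxF, map_zero, mul_zero] at h1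
    simp only [p, Polynomial.eval_finsetSum, Polynomial.eval_mul, Polynomial.eval_C,
      Polynomial.eval_pow, Polynomial.eval_X, Polynomial.eval_zero]
    rw [h1]
    exact Finset.sum_congr rfl fun _ _ => mul_comm _ _
  have := congrArg (fun p => Polynomial.coeff p m) hp
  simpa [p, Polynomial.finsetSum_coeff, Polynomial.coeff_X_pow, hm] using this

end Count

end CubicCount

open CubicCount

/-- Let `q` be a prime power of characteristic greater than 3, `n ≥ 5`, and
`F` a cubic form in `n` variables over `F_q` whose projective zero locus is smooth over the
algebraic closure. Then there is a constant `c > 0` such that for every `e ≥ 1` the number of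
tuples `x ∈ F_q[t]^n` with `gcd(x_1,…,x_n) = 1` (Bézout form), `max_i deg x_i = e` and
`F(x(t)) = 0` is at most `c * 27^e * q^(e(n-3))`. -/
theorem stmt_4 (q n : ℕ) (hq : ∃ p k : ℕ, p.Prime ∧ 0 < k ∧ q = p ^ k)
    (Fq : Type) [Field Fq] [Fintype Fq] (hcard : Fintype.card Fq = q)
    (hchar : 3 < ringChar Fq)
    (hn : 5 ≤ n) (F : MvPolynomial (Fin n) Fq)
    (hF : F ≠ 0) (hhom : F.IsHomogeneous 3)
    (hsmooth : ∀ v : Fin n → AlgebraicClosure Fq, v ≠ 0 →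
      eval v (MvPolynomial.map (algebraMap Fq (AlgebraicClosure Fq)) F) = 0 →
      ∃ i, eval v (pderiv i (MvPolynomial.map (algebraMap Fq (AlgebraicClosure Fq)) F)) ≠ 0) :
    ∃ c : ℕ, 0 < c ∧ ∀ e : ℕ, 1 ≤ e →
      {x : Fin n → Polynomial Fq |
          (∃ b : Fin n → Polynomial Fq, ∑ i, b i * x i = 1) ∧
          (∀ i, (x i).degree ≤ (e : ℕ)) ∧ (∃ i, (x i).degree = (e : ℕ)) ∧
          MvPolynomial.aeval x F = 0}.Finite ∧
      {x : Fin n → Polynomial Fq |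
          (∃ b : Fin n → Polynomial Fq, ∑ i, b i * x i = 1) ∧
          (∀ i, (x i).degree ≤ (e : ℕ)) ∧ (∃ i, (x i).degree = (e : ℕ)) ∧
          MvPolynomial.aeval x F = 0}.ncard
        ≤ c * 27 ^ e * q ^ (e * (n - 3)) := by
  classical
  subst hcard
  have hne : ∀ m : ℕ, 0 < m → m ≤ 3 → ((m : ℕ) : AlgebraicClosure Fq) ≠ 0 := by
    intro m h0 h3 h
    have : CharP (AlgebraicClosure Fq) (ringChar Fq) :=
      charP_of_injective_algebraMap (algebraMap Fq _).injective _
    have := Nat.le_of_dvd h0 ((CharP.cast_eq_zero_iff _ (ringChar Fq) m).1 h)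
    omega
  have hhom' := hhom.map (algebraMap Fq (AlgebraicClosure Fq))
  let c : SmoothCubic (AlgebraicClosure Fq) n := ofForm hhom'
    (by simpa using hne 2 (by simp) (by simp)) (by simpa using hne 3 (by simp) (by simp)) hsmooth
  have hc : ∀ v, c.T v v v = 6 * eval v (MvPolynomial.map (algebraMap Fq _) F) := polar_diag hhom'
  refine ⟨3 * Fintype.card Fq ^ (n - 1), by positivity, fun e _ => ?_⟩
  set S := {x : Fin n → Polynomial Fq |
          (∃ b : Fin n → Polynomial Fq, ∑ i, b i * x i = 1) ∧
          (∀ i, (x i).degree ≤ (e : ℕ)) ∧ (∃ i, (x i).degree = (e : ℕ)) ∧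
          MvPolynomial.aeval x F = 0} with hS
  have hdeg : S ⊆ {x | ∀ i, (x i).degree ≤ (e : ℕ)} := fun x hx => hx.2.1
  have hfin : S.Finite := by
    refine Set.Finite.of_finite_image (f := tupleCoeffs Fq e) (Set.toFinite _)
      ((tupleCoeffs_injOn Fq e).mono hdeg)
  refine ⟨hfin, ?_⟩
  have hinj := (tupleCoeffs_injOn (AlgebraicClosure Fq) e).mono hdeg
  rw [← hinj.ncard_image, Set.ncard_eq_toFinset_card _ (hfin.image _)]
  refine (c.card_le (Fq := Fq) hn e _ ?_ ?_).trans_eq ?_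
  · intro z hz m
    obtain ⟨x, hx, rfl⟩ := (hfin.image _).mem_toFinset.1 hz
    exact G_tupleCoeffs c F hc hx.2.1 hx.2.2.2 m
  · intro z hz i
    obtain ⟨x, hx, rfl⟩ := (hfin.image _).mem_toFinset.1 hz
    rw [tupleCoeffs, ← map_pow, FiniteField.pow_card]
  · rw [pow_succ, pow_mul, pow_add]
    norm_num
    ring
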